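/- Strong normalisation for system F with modified bar recursion: every closed term typeable in extended system F w.r.t. the type assignment Δ for the constants of MBR is strongly normalising w.r.t. MBR, i.e. there is no infinite reduction sequence from such a term under β-reduction together with the rules of MBR (Gödel primitive recursion, the pattern-matching rules for if, <, lh, get, ++, and modified bar recursion). -/

import Mathlib

open scoped Classical

namespace SNPaper

/-! ### Untyped lambda terms with constructors and constants -/

inductive Tm (CO : Type) (arity : CO → ℕ) (C : Type) : Type where
  | var : ℕ → Tm CO arity C
  | con : (co : CO) → (Fin (arity co) → Tm CO arity C) → Tm CO arity C
  | cst : C → Tm CO arity C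
  | lam : ℕ → Tm CO arity C → Tm CO arity C
  | app : Tm CO arity C → Tm CO arity C → Tm CO arity C

variable {CO : Type} {arity : CO → ℕ} {C C' : Type}

/-- Free variables of a term. -/
def FV : Tm CO arity C → Finset ℕ
  | .var x => {x}
  | .con _ f => Finset.univ.biUnion fun i => FV (f i)
  | .cst _ => ∅
  | .lam y M => FV M \ {y}
  | .app M N => FV M ∪ FV N

/-- A variable fresh for the finite set `s`. -/
def freshVar (s : Finset ℕ) : ℕ := (s.sup id) + 1

/-- Capture-avoiding simultaneous substitution (bound variables are renamed
to fresh ones, avoiding capture). -/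
def subst : Tm CO arity C → (ℕ → Tm CO arity C) → Tm CO arity C
  | .var x, σ => σ x
  | .con co f, σ => .con co fun i => subst (f i) σ
  | .cst c, _ => .cst c
  | .app M N, σ => .app (subst M σ) (subst N σ)
  | .lam y M, σ =>
      let z := freshVar ((FV M \ {y}).biUnion fun x => FV (σ x))
      .lam z (subst M (Function.update σ y (.var z)))

/-- Capture-avoiding substitution `M[N/x]` of a single variable. -/
def subst1 (M : Tm CO arity C) (x : ℕ) (N : Tm CO arity C) : Tm CO arity C :=
  subst M fun y => if y = x then N else .var y

/-- `Mθ`: replace every constant `c` by `θ c`. -/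
def mapConst (θ : C → C') : Tm CO arity C → Tm CO arity C'
  | .var x => .var x
  | .con co f => .con co fun i => mapConst θ (f i)
  | .cst c => .cst (θ c)
  | .lam y M => .lam y (mapConst θ M)
  | .app M N => .app (mapConst θ M) (mapConst θ N)

/-- The set of constants occurring in a term. -/
def consts : Tm CO arity C → Set C
  | .var _ => ∅
  | .con _ f => ⋃ i, consts (f i)
  | .cst c => {c}
  | .lam _ M => consts M
  | .app M N => consts M ∪ consts N

/-- Iterated application `h M₁ … M_n`. -/
def appList (h : Tm CO arity C) (l : List (Tm CO arity C)) : Tm CO arity C :=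
  l.foldl .app h

/-- Iterated abstraction `λx₁…x_n. M`. -/
def lamList (xs : List ℕ) (M : Tm CO arity C) : Tm CO arity C :=
  xs.foldr .lam M

/-! ### Constructor patterns -/

inductive Pat (CO : Type) (arity : CO → ℕ) : Type where
  | pvar : ℕ → Pat CO arity
  | pcon : (co : CO) → (Fin (arity co) → Pat CO arity) → Pat CO arity

def Pat.toTm : Pat CO arity → Tm CO arity C
  | .pvar x => .var x
  | .pcon co qs => .con co fun i => (qs i).toTm

/-- Instantiate a pattern by a substitution (patterns contain no binders,
so this is plain structural substitution). -/
def Pat.substT (σ : ℕ → Tm CO arity C) : Pat CO arity → Tm CO arity C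
  | .pvar x => σ x
  | .pcon co qs => .con co fun i => (qs i).substT σ

def Pat.psubst (σ : ℕ → Pat CO arity) : Pat CO arity → Pat CO arity
  | .pvar x => σ x
  | .pcon co qs => .pcon co fun i => (qs i).psubst σ

/-- Number of occurrences of the variable `x` in a pattern. -/
def Pat.varCount (x : ℕ) : Pat CO arity → ℕ
  | .pvar y => if y = x then 1 else 0
  | .pcon _ qs => ∑ i, (qs i).varCount x

def Pat.vars : Pat CO arity → Finset ℕ
  | .pvar x => {x}
  | .pcon _ qs => Finset.univ.biUnion fun i => (qs i).vars

/-- The patterns in the list are linear and mutually variable disjoint: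
no variable occurs twice in the whole vector. -/
def PatsLinearDisjoint (Ps : List (Pat CO arity)) : Prop :=
  ∀ x : ℕ, (Ps.map (Pat.varCount x)).sum ≤ 1

/-- Two vectors of patterns are unifiable if they have a common instance. -/
def Unifiable (Ps Qs : List (Pat CO arity)) : Prop :=
  ∃ σ τ : ℕ → Pat CO arity, Ps.map (Pat.psubst σ) = Qs.map (Pat.psubst τ)

/-! ### Rewrite systems -/

/-- A rewrite rule `c P₁ … P_n ↦ R`. -/
structure Rule (CO : Type) (arity : CO → ℕ) (C : Type) where
  head : C
  pats : List (Pat CO arity)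
  rhs : Tm CO arity C

/-- The left hand side `c P₁ … P_n` of a rule, as a term. -/
def lhsTm (r : Rule CO arity C) : Tm CO arity C :=
  appList (.cst r.head) (r.pats.map Pat.toTm)

/-- Well-formedness of a rewrite system: patterns of each rule are linear and
mutually variable disjoint, free variables of the right hand side occur in the
left hand side, all rules for one constant have the same arity, and left hand
sides of different rules are non-unifiable. -/
structure WfRS (R : Set (Rule CO arity C)) : Prop where
  linear : ∀ r ∈ R, PatsLinearDisjoint r.pats
  fv_sub : ∀ r ∈ R, ∀ x ∈ FV r.rhs, ∃ P ∈ r.pats, x ∈ P.vars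
  arity_consistent : ∀ r ∈ R, ∀ r' ∈ R, r.head = r'.head → r.pats.length = r'.pats.length
  non_unifiable : ∀ r ∈ R, ∀ r' ∈ R, r.head = r'.head → r ≠ r' →
    ¬ Unifiable r.pats r'.pats

/-- One-step reduction `M →_R N`: contraction of a β-redex or of an instance of
a rewrite rule, in an arbitrary subterm position. -/
inductive Step (R : Set (Rule CO arity C)) : Tm CO arity C → Tm CO arity C → Prop where
  | beta (x : ℕ) (M N : Tm CO arity C) :
      Step R (.app (.lam x M) N) (subst1 M x N)
  | rule (r : Rule CO arity C) (hr : r ∈ R) (σ : ℕ → Tm CO arity C) :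
      Step R (appList (.cst r.head) (r.pats.map (Pat.substT σ))) (subst r.rhs σ)
  | appL {M M' N : Tm CO arity C} : Step R M M' → Step R (.app M N) (.app M' N)
  | appR {M N N' : Tm CO arity C} : Step R N N' → Step R (.app M N) (.app M N')
  | lamC {M M' : Tm CO arity C} (x : ℕ) : Step R M M' → Step R (.lam x M) (.lam x M')
  | conC {co : CO} {f : Fin (arity co) → Tm CO arity C} (i : Fin (arity co))
      {M' : Tm CO arity C} : Step R (f i) M' →
      Step R (.con co f) (.con co (Function.update f i M'))

/-- Strong normalisation: every reduction sequence from `M` terminates,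
expressed via accessibility (the inductive characterisation). -/
def SN (R : Set (Rule CO arity C)) (M : Tm CO arity C) : Prop :=
  Acc (fun N M => Step R M N) M

/-- A constant is stratified w.r.t. `R` if all right hand sides of its rules
contain only stratified constants. -/
inductive Stratified (R : Set (Rule CO arity C)) : C → Prop where
  | intro (c : C) :
      (∀ r ∈ R, r.head = c → ∀ c' ∈ consts r.rhs, Stratified R c') →
      Stratified R c

/-! ### Stratified approximations -/

/-- `M_n`: replace every constant `c` of `M` by its `n`-th variant `c_n`
(we realize `C_ω` as `C × ℕ`). -/
def stratTm (n : ℕ) (M : Tm CO arity C) : Tm CO arity (C × ℕ) :=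
  mapConst (fun c => (c, n)) M

/-- The stratified rewrite system `R_ω = {c_{n+1} P⃗ ↦ R_n | c P⃗ ↦ R ∈ R}`. -/
def Romega (R : Set (Rule CO arity C)) : Set (Rule CO arity (C × ℕ)) :=
  {r' | ∃ r ∈ R, ∃ n : ℕ, r' = ⟨(r.head, n + 1), r.pats, stratTm n r.rhs⟩}

/-! ### The strict domain-theoretic model -/

open OmegaCompletePartialOrder in
/-- A model of the recursive domain equation
`D = Σ_{co} D^{arity co} + (D → D)` : a Scott domain (here: an ω-cpo with
least element) together with continuous operations `abst`, `ap`, `con`,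
projections and `case`, satisfying the usual equations. -/
structure DomModel (CO : Type) (arity : CO → ℕ) (D : Type)
    [OmegaCompletePartialOrder D] [OrderBot D] : Type where
  abst : (D → D) → D
  ap : D → D → D
  con : (co : CO) → (Fin (arity co) → D) → D
  proj : (co : CO) → Fin (arity co) → D → D
  case : D → Option (CO ⊕ Unit)
  case_con : ∀ co as, case (con co as) = some (Sum.inl co)
  case_abst : ∀ f, case (abst f) = some (Sum.inr ())
  case_bot : case ⊥ = none
  proj_con : ∀ co as i, proj co i (con co as) = as i
  ap_abst : ∀ f b, ap (abst f) b = f b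
  abst_cont : ωScottContinuous abst
  ap_cont : ωScottContinuous fun p : D × D => ap p.1 p.2
  con_cont : ∀ co, ωScottContinuous (con co)
  proj_cont : ∀ co i, ωScottContinuous (proj co i)

variable {D : Type} [OmegaCompletePartialOrder D] [OrderBot D]

/-- Strict version of `abst`. -/
noncomputable def strAbst (Dm : DomModel CO arity D) (f : D → D) : D :=
  if f = fun _ => (⊥ : D) then ⊥ else Dm.abst f

/-- Strict version of `ap`. -/
noncomputable def strAp (Dm : DomModel CO arity D) (a b : D) : D :=
  if a = ⊥ ∨ b = ⊥ then ⊥ else Dm.ap a b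

/-- Strict version of a constructor. -/
noncomputable def strCon (Dm : DomModel CO arity D) (co : CO)
    (as : Fin (arity co) → D) : D :=
  if ∃ i, as i = ⊥ then ⊥ else Dm.con co as

/-- The strict denotational semantics `⟦M⟧_α η`. -/
noncomputable def sem (Dm : DomModel CO arity D) :
    Tm CO arity C → (C → D) → (ℕ → D) → D
  | .var x, _, η => η x
  | .cst c, α, _ => α c
  | .con co f, α, η => strCon Dm co fun i => sem Dm (f i) α η
  | .lam y M, α, η => strAbst Dm fun a => sem Dm M α (Function.update η y a)
  | .app M N, α, η => strAp Dm (sem Dm M α η) (sem Dm N α η)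

/-! ### The pattern inverse `P⃗⁻¹` -/

/-- Combine the results of matching the components of a pattern vector,
left to right: the leftmost non-successful result wins; on success the
(variable-disjoint) partial environments are merged. -/
noncomputable def combineList :
    List (Option (Option (ℕ → Option D))) → Option (Option (ℕ → Option D))
  | [] => some (some fun _ => none)
  | r :: rs =>
    match r with
    | some (some η) =>
      match combineList rs with
      | some (some η') => some (some fun x => (η x).orElse fun _ => η' x)
      | other => other
    | bad => bad

/-- Match a single pattern against a domain element, producing `⊥` (`none`),
`Nothing` (`some none`) or `Just` a partial environment. -/
noncomputable def pmatch (Dm : DomModel CO arity D) :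
    Pat CO arity → D → Option (Option (ℕ → Option D))
  | .pvar x, a => some (some fun y => if y = x then some a else none)
  | .pcon co qs, b =>
    match Dm.case b with
    | none => none
    | some (Sum.inr _) => some none
    | some (Sum.inl co') =>
      if h : co' = co then
        combineList (List.ofFn fun i => pmatch Dm (qs i) (Dm.proj co i b))
      else some none

/-- The inverse `P⃗⁻¹ : D^k → Maybe (D^Var)` of a vector of mutually variable
disjoint constructor patterns (`none` = ⊥, `some none` = Nothing,
`some (some η)` = Just η, where `η` is `⊥` outside the pattern variables). -/
noncomputable def pinv (Dm : DomModel CO arity D) (Ps : List (Pat CO arity))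
    (as : List D) : Option (Option (ℕ → D)) :=
  (combineList (List.zipWith (pmatch Dm) Ps as)).map
    (Option.map fun η x => (η x).getD ⊥)

/-! ### The constant assignment `α_R` -/

/-- The arity (number of argument patterns) of a constant in `R`. -/
noncomputable def carity (R : Set (Rule CO arity C)) (c : C) : ℕ :=
  if h : ∃ r, r ∈ R ∧ r.head = c then h.choose.pats.length else 0

/-- `abstN k f` is `abst(λa₁. abst(λa₂. … abst(λa_k. f [a₁,…,a_k])…))`. -/
noncomputable def abstN (Dm : DomModel CO arity D) : ℕ → (List D → D) → D
  | 0, f => f []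
  | k + 1, f => Dm.abst fun a => abstN Dm k fun as => f (a :: as)

/-- The value of constant `c` on arguments `as`, by pattern matching on the
rules of `R`: the matching rule's right hand side if one matches, `dummy` on
definite mismatch of all rules, and `⊥` otherwise. -/
noncomputable def ruleVal (Dm : DomModel CO arity D) (R : Set (Rule CO arity C))
    (dummy : D) (α : C → D) (c : C) (as : List D) : D :=
  if h : ∃ r, r ∈ R ∧ r.head = c ∧ ∃ η : ℕ → D, pinv Dm r.pats as = some (some η) then
    sem Dm h.choose.rhs α h.choose_spec.2.2.choose
  else if ∀ r ∈ R, r.head = c → pinv Dm r.pats as = some none then dummy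
  else ⊥

/-- The operator `Γ_R` on constant assignments whose least fixed point is `α_R`. -/
noncomputable def Gamma (Dm : DomModel CO arity D) (R : Set (Rule CO arity C))
    (dummy : D) (α : C → D) : C → D :=
  fun c =>
    if ∃ r, r ∈ R ∧ r.head = c then
      abstN Dm (carity R c) (ruleVal Dm R dummy α c)
    else ⊥

/-- `a` is the least fixed point of `f`. -/
def IsLeastFixedPoint {α : Type*} [Preorder α] (f : α → α) (a : α) : Prop :=
  f a = a ∧ ∀ b, f b = b → a ≤ b

end SNPaper
namespace SNPaper

/-! ### Extended system F -/

/-- The constructors `T, F, 0, S, nil, cons`. -/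
inductive FCO : Type where
  | tt | ff | zero | succ | nil | cons
  deriving DecidableEq

/-- Their arities. -/
def fArity : FCO → ℕ
  | .tt => 0
  | .ff => 0
  | .zero => 0
  | .succ => 1
  | .nil => 0
  | .cons => 2

/-- Types of extended system F: type variables, `boole`, `nat`, lists `ρ*`,
arrow types and `∀p.ρ`. -/
inductive FTy : Type where
  | tvar : ℕ → FTy
  | boole : FTy
  | nat : FTy
  | list : FTy → FTy
  | arr : FTy → FTy → FTy
  | all : ℕ → FTy → FTy

/-- Free type variables. -/
def ftv : FTy → Finset ℕ
  | .tvar p => {p}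
  | .boole => ∅
  | .nat => ∅
  | .list ρ => ftv ρ
  | .arr ρ σ => ftv ρ ∪ ftv σ
  | .all p ρ => ftv ρ \ {p}

/-- A type is closed if it has no free type variables. -/
def FTy.Closed (ρ : FTy) : Prop := ftv ρ = ∅

/-- Capture-avoiding simultaneous substitution on types. -/
def tsubst : FTy → (ℕ → FTy) → FTy
  | .tvar p, σ => σ p
  | .boole, _ => .boole
  | .nat, _ => .nat
  | .list ρ, σ => .list (tsubst ρ σ)
  | .arr ρ τ, σ => .arr (tsubst ρ σ) (tsubst τ σ)
  | .all p ρ, σ =>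
      let z := freshVar ((ftv ρ \ {p}).biUnion fun q => ftv (σ q))
      .all z (tsubst ρ (Function.update σ p (.tvar z)))

/-- Capture-avoiding substitution `ρ[τ/p]` of a single type variable. -/
def tsubst1 (ρ : FTy) (p : ℕ) (τ : FTy) : FTy :=
  tsubst ρ fun q => if q = p then τ else .tvar q

section FTerms

variable {C : Type}

/-- The constructor terms. -/
def tmT : Tm FCO fArity C := .con .tt ![]
def tmF : Tm FCO fArity C := .con .ff ![]
def tmZero : Tm FCO fArity C := .con .zero ![]
def tmSucc (M : Tm FCO fArity C) : Tm FCO fArity C := .con .succ ![M]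
def tmNil : Tm FCO fArity C := .con .nil ![]
def tmCons (M N : Tm FCO fArity C) : Tm FCO fArity C := .con .cons ![M, N]

end FTerms

/-- Object variable contexts. -/
def Ctx : Type := ℕ → Option FTy

/-- The empty context. -/
def emptyCtx : Ctx := fun _ => none

/-- The typing judgements `Δ, Γ ⊢_C M : ρ` of extended system F
(Curry style, with the constructor rules). -/
inductive FTyd {C : Type} (Δ : C → FTy) : Ctx → Tm FCO fArity C → FTy → Prop where
  | var {Γ : Ctx} {x : ℕ} {ρ : FTy} : Γ x = some ρ → FTyd Δ Γ (.var x) ρ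
  | cst {Γ : Ctx} (c : C) : FTyd Δ Γ (.cst c) (Δ c)
  | lam {Γ : Ctx} {x : ℕ} {M : Tm FCO fArity C} {ρ σ : FTy} :
      FTyd Δ (fun y => if y = x then some ρ else Γ y) M σ →
      FTyd Δ Γ (.lam x M) (.arr ρ σ)
  | app {Γ : Ctx} {M N : Tm FCO fArity C} {ρ σ : FTy} :
      FTyd Δ Γ M (.arr ρ σ) → FTyd Δ Γ N ρ → FTyd Δ Γ (.app M N) σ
  | allI {Γ : Ctx} {M : Tm FCO fArity C} {ρ : FTy} {p : ℕ} :
      FTyd Δ Γ M ρ → (∀ x σ, Γ x = some σ → p ∉ ftv σ) →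
      FTyd Δ Γ M (.all p ρ)
  | allE {Γ : Ctx} {M : Tm FCO fArity C} {ρ : FTy} {p : ℕ} (σ : FTy) :
      FTyd Δ Γ M (.all p ρ) → FTyd Δ Γ M (tsubst1 ρ p σ)
  | tt {Γ : Ctx} : FTyd Δ Γ tmT .boole
  | ff {Γ : Ctx} : FTyd Δ Γ tmF .boole
  | zero {Γ : Ctx} : FTyd Δ Γ tmZero .nat
  | succ {Γ : Ctx} {M : Tm FCO fArity C} : FTyd Δ Γ M .nat → FTyd Δ Γ (tmSucc M) .nat
  | nil {Γ : Ctx} {ρ : FTy} : FTyd Δ Γ tmNil (.list ρ)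
  | cons {Γ : Ctx} {M N : Tm FCO fArity C} {ρ : FTy} :
      FTyd Δ Γ M ρ → FTyd Δ Γ N (.list ρ) → FTyd Δ Γ (tmCons M N) (.list ρ)

/-- Type-soundness of a rewrite system w.r.t. the type system `(T₀, ⊢_F)`:
for every rule `L ↦ R` with `FV L = x⃗` and every closed type `ρ`,
`Δ ⊢_F λx⃗.L : ρ` implies `Δ ⊢_F λx⃗.R : ρ`. -/
def FTypeSound {C : Type} (R : Set (Rule FCO fArity C)) (Δ : C → FTy) : Prop :=
  ∀ r ∈ R, ∀ xs : List ℕ, xs.Nodup → xs.toFinset = FV (lhsTm r) →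
    ∀ ρ : FTy, ρ.Closed →
      FTyd Δ emptyCtx (lamList xs (lhsTm r)) ρ →
      FTyd Δ emptyCtx (lamList xs r.rhs) ρ

/-! ### The candidate semantics of types -/

section FSem

variable {D : Type} [OmegaCompletePartialOrder D] [OrderBot D]

/-- Denotations of the constructors. -/
def dT (Dm : DomModel FCO fArity D) : D := Dm.con .tt ![]
def dF (Dm : DomModel FCO fArity D) : D := Dm.con .ff ![]
def dZero (Dm : DomModel FCO fArity D) : D := Dm.con .zero ![]
def dSucc (Dm : DomModel FCO fArity D) (a : D) : D := Dm.con .succ ![a]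
def dNil (Dm : DomModel FCO fArity D) : D := Dm.con .nil ![]
def dCons (Dm : DomModel FCO fArity D) (a d : D) : D := Dm.con .cons ![a, d]

/-- `Ñ`: the least subset of `D` containing `{0} ∪ abst(D)` and closed
under the constructor `S`. -/
inductive NSet (Dm : DomModel FCO fArity D) : D → Prop where
  | zero : NSet Dm (dZero Dm)
  | ab (f : D → D) : NSet Dm (Dm.abst f)
  | succ {d : D} : NSet Dm d → NSet Dm (dSucc Dm d)

/-- `L(A)`: the least subset of `D` containing `{nil} ∪ abst(D)` and
containing `cons(a,d)` for `a ∈ A` and `d ∈ L(A)`. -/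
inductive LSet (Dm : DomModel FCO fArity D) (A : Set D) : D → Prop where
  | nil : LSet Dm A (dNil Dm)
  | ab (f : D → D) : LSet Dm A (Dm.abst f)
  | cons {a d : D} : a ∈ A → LSet Dm A d → LSet Dm A (dCons Dm a d)

/-- `B̃ = {T, F} ∪ abst(D)`. -/
def BSet (Dm : DomModel FCO fArity D) : Set D :=
  {dT Dm, dF Dm} ∪ Set.range Dm.abst

/-- `A → B = { abst f | ∀ a ∈ A, f a ∈ B }`. -/
def arrSet (Dm : DomModel FCO fArity D) (A B : Set D) : Set D :=
  {x | ∃ f : D → D, x = Dm.abst f ∧ ∀ a ∈ A, f a ∈ B}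

/-- The candidates: subsets of `D` containing `dummy` and avoiding `⊥`. -/
def Cand (dummy : D) : Set (Set D) :=
  {A : Set D | dummy ∈ A ∧ (⊥ : D) ∉ A}

/-- The candidate semantics `⟦ρ⟧_τ` of types. -/
def tySem (Dm : DomModel FCO fArity D) (dummy : D) : FTy → (ℕ → Set D) → Set D
  | .tvar p, τ => τ p
  | .boole, _ => BSet Dm
  | .nat, _ => {d | NSet Dm d}
  | .list ρ, τ => {d | LSet Dm (tySem Dm dummy ρ τ) d}
  | .arr ρ σ, τ => arrSet Dm (tySem Dm dummy ρ τ) (tySem Dm dummy σ τ)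
  | .all p ρ, τ => ⋂ A ∈ Cand dummy, tySem Dm dummy ρ (Function.update τ p A)

end FSem

/-! ### The rewrite system MBR -/

/-- The constants of MBR: `if`, `<`, `lh`, `get`, `++` (cat), Gödel primitive
recursion `rec`, and the modified bar recursion constants `Φ` (phi) and
`Ψ` (psi). -/
inductive MC : Type where
  | cif | clt | clh | cget | cat | crec | cphi | cpsi
  deriving DecidableEq

/-- Pattern abbreviations. -/
def pT : Pat FCO fArity := .pcon .tt ![]
def pF : Pat FCO fArity := .pcon .ff ![]
def pZero : Pat FCO fArity := .pcon .zero ![]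
def pSucc (P : Pat FCO fArity) : Pat FCO fArity := .pcon .succ ![P]
def pNil : Pat FCO fArity := .pcon .nil ![]
def pCons (P Q : Pat FCO fArity) : Pat FCO fArity := .pcon .cons ![P, Q]

def app2 {C : Type} (h M N : Tm FCO fArity C) : Tm FCO fArity C :=
  .app (.app h M) N
def app3 {C : Type} (h M N K : Tm FCO fArity C) : Tm FCO fArity C :=
  .app (app2 h M N) K

/-- The rules of MBR.  Variables: in the `Φ`/`Ψ` rules, `0,1,2,3,4` stand for
`y, g, s, k, x` respectively. -/
def mbrList : List (Rule FCO fArity MC) :=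
  [ -- if T x y ↦ x ; if F x y ↦ y
    ⟨.cif, [pT, .pvar 0, .pvar 1], .var 0⟩,
    ⟨.cif, [pF, .pvar 0, .pvar 1], .var 1⟩,
    -- n < 0 ↦ F ; 0 < S m ↦ T ; S n < S m ↦ n < m
    ⟨.clt, [.pvar 0, pZero], tmF⟩,
    ⟨.clt, [pZero, pSucc (.pvar 0)], tmT⟩,
    ⟨.clt, [pSucc (.pvar 0), pSucc (.pvar 1)], app2 (.cst .clt) (.var 0) (.var 1)⟩,
    -- lh nil ↦ 0 ; lh (cons x s) ↦ S (lh s)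
    ⟨.clh, [pNil], tmZero⟩,
    ⟨.clh, [pCons (.pvar 0) (.pvar 1)], tmSucc (.app (.cst .clh) (.var 1))⟩,
    -- get (cons x s) 0 ↦ x ; get (cons x s) (S n) ↦ get s n
    ⟨.cget, [pCons (.pvar 0) (.pvar 1), pZero], .var 0⟩,
    ⟨.cget, [pCons (.pvar 0) (.pvar 1), pSucc (.pvar 2)],
      app2 (.cst .cget) (.var 1) (.var 2)⟩,
    -- nil ++ t ↦ t ; cons x s ++ t ↦ cons x (s ++ t)
    ⟨.cat, [pNil, .pvar 0], .var 0⟩,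
    ⟨.cat, [pCons (.pvar 0) (.pvar 1), .pvar 2],
      tmCons (.var 0) (app2 (.cst .cat) (.var 1) (.var 2))⟩,
    -- rec x f 0 ↦ x ; rec x f (S n) ↦ f n (rec x f n)   (Gödel primitive recursion)
    ⟨.crec, [.pvar 0, .pvar 1, pZero], .var 0⟩,
    ⟨.crec, [.pvar 0, .pvar 1, pSucc (.pvar 2)],
      app2 (.var 1) (.var 2) (app3 (.cst .crec) (.var 0) (.var 1) (.var 2))⟩,
    -- Φ y g s ↦ y (λk. Ψ y g s k (k < lh s))
    ⟨.cphi, [.pvar 0, .pvar 1, .pvar 2],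
      .app (.var 0) (.lam 3 (app2 (app3 (.cst .cpsi) (.var 0) (.var 1) (.var 2))
        (.var 3) (app2 (.cst .clt) (.var 3) (.app (.cst .clh) (.var 2)))))⟩,
    -- Ψ y g s k T ↦ get s k
    ⟨.cpsi, [.pvar 0, .pvar 1, .pvar 2, .pvar 3, pT],
      app2 (.cst .cget) (.var 2) (.var 3)⟩,
    -- Ψ y g s k F ↦ g k (λx. Φ y g (s ++ cons(x, nil)))
    ⟨.cpsi, [.pvar 0, .pvar 1, .pvar 2, .pvar 3, pF],
      app2 (.var 1) (.var 3)
        (.lam 4 (app3 (.cst .cphi) (.var 0) (.var 1)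
          (app2 (.cst .cat) (.var 2) (tmCons (.var 4) tmNil))))⟩ ]

/-- The rewrite system MBR (as a set of rules). -/
def MBR : Set (Rule FCO fArity MC) := {r | r ∈ mbrList}

/-- The type assignment `Δ` for the constants of MBR. -/
def ΔMBR : MC → FTy
  | .cif => .all 0 (.arr .boole (.arr (.tvar 0) (.arr (.tvar 0) (.tvar 0))))
  | .clt => .arr .nat (.arr .nat .boole)
  | .clh => .all 0 (.arr (.list (.tvar 0)) .nat)
  | .cget => .all 0 (.arr (.list (.tvar 0)) (.arr .nat (.tvar 0)))
  | .cat => .all 0 (.arr (.list (.tvar 0)) (.arr (.list (.tvar 0)) (.list (.tvar 0))))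
  | .crec => .all 0 (.arr (.tvar 0)
      (.arr (.arr .nat (.arr (.tvar 0) (.tvar 0))) (.arr .nat (.tvar 0))))
  | .cphi => .all 0 (.arr (.arr (.arr .nat (.tvar 0)) .nat)
      (.arr (.arr .nat (.arr (.arr (.tvar 0) .nat) (.tvar 0)))
        (.arr (.list (.tvar 0)) .nat)))
  | .cpsi => .all 0 (.arr (.arr (.arr .nat (.tvar 0)) .nat)
      (.arr (.arr .nat (.arr (.arr (.tvar 0) .nat) (.tvar 0)))
        (.arr (.list (.tvar 0)) (.arr .nat (.arr .boole (.tvar 0))))))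

end SNPaper
namespace SNPaper
namespace Pf

/-! ### De Bruijn terms -/

inductive DB : Type where
  | var : ℕ → DB
  | cst : MC → DB
  | k0 : FCO → DB
  | k1 : DB → DB
  | k2 : DB → DB → DB
  | lam : DB → DB
  | app : DB → DB → DB

def upr (r : ℕ → ℕ) : ℕ → ℕ
  | 0 => 0
  | n + 1 => r n + 1

def rn : (ℕ → ℕ) → DB → DB
  | r, .var n => .var (r n)
  | _, .cst c => .cst c
  | _, .k0 a => .k0 a
  | r, .k1 M => .k1 (rn r M)
  | r, .k2 M N => .k2 (rn r M) (rn r N)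
  | r, .lam M => .lam (rn (upr r) M)
  | r, .app M N => .app (rn r M) (rn r N)

def ups (s : ℕ → DB) : ℕ → DB
  | 0 => .var 0
  | n + 1 => rn Nat.succ (s n)

def sb : (ℕ → DB) → DB → DB
  | s, .var n => s n
  | _, .cst c => .cst c
  | _, .k0 a => .k0 a
  | s, .k1 M => .k1 (sb s M)
  | s, .k2 M N => .k2 (sb s M) (sb s N)
  | s, .lam M => .lam (sb (ups s) M)
  | s, .app M N => .app (sb s M) (sb s N)

def scons {α : Type} (a : α) (s : ℕ → α) : ℕ → α
  | 0 => a
  | n + 1 => s n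

theorem rn_rn (M : DB) : ∀ r r' : ℕ → ℕ, rn r (rn r' M) = rn (r ∘ r') M := by
  induction M with
  | lam M ih =>
    intro r r'
    simp only [rn, ih]
    congr 2
    funext n
    cases n <;> rfl
  | _ => intro r r'; simp_all [rn]

theorem sb_rn (M : DB) : ∀ (s : ℕ → DB) (r : ℕ → ℕ), sb s (rn r M) = sb (s ∘ r) M := by
  induction M with
  | lam M ih =>
    intro r r'
    simp only [rn, sb, ih]
    congr 2
    funext n
    cases n <;> rfl
  | _ => intro r r'; simp_all [rn, sb]

theorem rn_sb (M : DB) : ∀ (r : ℕ → ℕ) (s : ℕ → DB), rn r (sb s M) = sb (fun n => rn r (s n)) M := by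
  induction M with
  | lam M ih =>
    intro r s
    simp only [rn, sb, ih]
    congr 2
    funext n
    cases n with
    | zero => rfl
    | succ n => simp only [ups, rn_rn]; rfl
  | _ => intro r r'; simp_all [rn, sb]

theorem sb_sb (M : DB) : ∀ (s t : ℕ → DB), sb s (sb t M) = sb (fun n => sb s (t n)) M := by
  induction M with
  | lam M ih =>
    intro r s
    simp only [sb, ih]
    congr 2
    funext n
    cases n with
    | zero => rfl
    | succ n => simp only [ups, rn_sb, sb_rn]; rfl
  | _ => intro r r'; simp_all [sb]

theorem sb_id (M : DB) : sb .var M = M := by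
  induction M with
  | lam M ih =>
    have h : ups .var = .var := by funext n; cases n <;> rfl
    simp only [sb, h, ih]
  | _ => simp_all [sb]

theorem inst_ups (θ : ℕ → DB) (M N : DB) :
    sb (scons N .var) (sb (ups θ) M) = sb (scons N θ) M := by
  rw [sb_sb]
  congr 1
  funext n
  cases n with
  | zero => rfl
  | succ n =>
    simp only [ups, sb_rn]
    exact sb_id _

theorem sb_inst (θ : ℕ → DB) (M N : DB) :
    sb θ (sb (scons N .var) M) = sb (scons (sb θ N) .var) (sb (ups θ) M) := by
  rw [inst_ups, sb_sb]
  congr 1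
  funext n
  cases n <;> rfl

/-! ### The rules, generically -/

def rhsPhi : DB :=
  .app (.var 0) (.lam (.app (.app (.app (.app (.app (.cst .cpsi) (.var 1)) (.var 2)) (.var 3))
    (.var 0)) (.app (.app (.cst .clt) (.var 0)) (.app (.cst .clh) (.var 3)))))

def rhsPsi : DB :=
  .app (.app (.var 1) (.var 3)) (.lam (.app (.app (.app (.cst .cphi) (.var 1)) (.var 2))
    (.app (.app (.cst .cat) (.var 3)) (.k2 (.var 0) (.k0 .nil)))))

/-- Matching of the rules of MBR against a (reversed) list of arguments. -/
inductive Mt {α : Type} (K : FCO → α → Prop) (Su : α → α → Prop) (Co : α → α → α → Prop) :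
    MC → List α → DB → List α → Prop where
  | ifT {b x y} : K .tt b → Mt K Su Co .cif [y, x, b] (.var 0) [x, y]
  | ifF {b x y} : K .ff b → Mt K Su Co .cif [y, x, b] (.var 1) [x, y]
  | lt0 {m n} : K .zero m → Mt K Su Co .clt [m, n] (.k0 .ff) [n]
  | ltS {m n m'} : K .zero n → Su m' m → Mt K Su Co .clt [m, n] (.k0 .tt) [m']
  | ltSS {m n m' n'} : Su n' n → Su m' m →
      Mt K Su Co .clt [m, n] (.app (.app (.cst .clt) (.var 0)) (.var 1)) [n', m']
  | lh0 {s} : K .nil s → Mt K Su Co .clh [s] (.k0 .zero) []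
  | lhS {x s' s} : Co x s' s → Mt K Su Co .clh [s] (.k1 (.app (.cst .clh) (.var 1))) [x, s']
  | get0 {x s' s n} : Co x s' s → K .zero n → Mt K Su Co .cget [n, s] (.var 0) [x, s']
  | getS {x s' s n n'} : Co x s' s → Su n' n →
      Mt K Su Co .cget [n, s] (.app (.app (.cst .cget) (.var 1)) (.var 2)) [x, s', n']
  | cat0 {s t} : K .nil s → Mt K Su Co .cat [t, s] (.var 0) [t]
  | catS {x s' s t} : Co x s' s →
      Mt K Su Co .cat [t, s] (.k2 (.var 0) (.app (.app (.cst .cat) (.var 1)) (.var 2))) [x, s', t]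
  | rec0 {x f n} : K .zero n → Mt K Su Co .crec [n, f, x] (.var 0) [x, f]
  | recS {x f n n'} : Su n' n →
      Mt K Su Co .crec [n, f, x] (.app (.app (.var 1) (.var 2))
        (.app (.app (.app (.cst .crec) (.var 0)) (.var 1)) (.var 2))) [x, f, n']
  | phi {y g s} : Mt K Su Co .cphi [s, g, y] rhsPhi [y, g, s]
  | psiT {y g s k b} : K .tt b →
      Mt K Su Co .cpsi [b, k, s, g, y] (.app (.app (.cst .cget) (.var 2)) (.var 3)) [y, g, s, k]
  | psiF {y g s k b} : K .ff b → Mt K Su Co .cpsi [b, k, s, g, y] rhsPsi [y, g, s, k]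

/-- Stuck arguments. -/
inductive Ms {α : Type} (St : α → Prop) (K : FCO → α → Prop) (Su : α → α → Prop)
    (Co : α → α → α → Prop) : MC → List α → Prop where
  | ifs {b x y} : St b → Ms St K Su Co .cif [y, x, b]
  | lt2 {m n} : St m → Ms St K Su Co .clt [m, n]
  | lt1 {m m' n} : St n → Su m' m → Ms St K Su Co .clt [m, n]
  | lh {s} : St s → Ms St K Su Co .clh [s]
  | get1 {s n} : St s → Ms St K Su Co .cget [n, s]
  | getN {s n} : K .nil s → Ms St K Su Co .cget [n, s]
  | get2 {x s' s n} : Co x s' s → St n → Ms St K Su Co .cget [n, s]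
  | cat {s t} : St s → Ms St K Su Co .cat [t, s]
  | recs {x f n} : St n → Ms St K Su Co .crec [n, f, x]
  | psi {y g s k b} : St b → Ms St K Su Co .cpsi [b, k, s, g, y]

def ar : MC → ℕ
  | .cif => 3 | .clt => 2 | .clh => 1 | .cget => 2 | .cat => 2 | .crec => 3 | .cphi => 3
  | .cpsi => 5

theorem Mt.len {α : Type} {K : FCO → α → Prop} {Su : α → α → Prop} {Co : α → α → α → Prop}
    {c l rhs es} (h : Mt K Su Co c l rhs es) : l.length = ar c := by
  cases h <;> rfl

theorem Ms.len {α : Type} {S : α → Prop} {K : FCO → α → Prop} {Su : α → α → Prop}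
    {Co : α → α → α → Prop} {c l} (h : Ms S K Su Co c l) : l.length = ar c := by
  cases h <;> rfl

/-- Simulation of matchings. -/
theorem Mt.sim {α β : Type} {K : FCO → α → Prop} {Su : α → α → Prop} {Co : α → α → α → Prop}
    {K' : FCO → β → Prop} {Su' : β → β → Prop} {Co' : β → β → β → Prop}
    (rel : β → α → Prop)
    (hK : ∀ a x, K a x → ∃ y, rel y x ∧ K' a y)
    (hS : ∀ e x e', Su e x → rel e' e → ∃ y, rel y x ∧ Su' e' y)
    (hC : ∀ e d x e' d', Co e d x → rel e' e → rel d' d → ∃ y, rel y x ∧ Co' e' d' y)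
    {c l rhs es es'} (h : Mt K Su Co c l rhs es) (hes : List.Forall₂ rel es' es) :
    ∃ l', List.Forall₂ rel l' l ∧ Mt K' Su' Co' c l' rhs es' := by
  cases h <;> simp only [List.forall₂_cons_right_iff, List.forall₂_nil_right_iff] at hes
  case ifT b x y hb =>
    obtain ⟨x', _, hx, ⟨y', _, hy, rfl, rfl⟩, rfl⟩ := hes
    obtain ⟨b', hb1, hb2⟩ := hK _ _ hb
    exact ⟨[y', x', b'], by simp [*], .ifT hb2⟩
  case ifF b x y hb =>
    obtain ⟨x', _, hx, ⟨y', _, hy, rfl, rfl⟩, rfl⟩ := hes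
    obtain ⟨b', hb1, hb2⟩ := hK _ _ hb
    exact ⟨[y', x', b'], by simp [*], .ifF hb2⟩
  case lt0 m n hb =>
    obtain ⟨x', _, hx, rfl, rfl⟩ := hes
    obtain ⟨b', hb1, hb2⟩ := hK _ _ hb
    exact ⟨[b', x'], by simp [*], .lt0 hb2⟩
  case ltS m n m' h1 h2 =>
    obtain ⟨x', _, hx, rfl, rfl⟩ := hes
    obtain ⟨b', hb1, hb2⟩ := hK _ _ h1
    obtain ⟨c', hc1, hc2⟩ := hS _ _ _ h2 hx
    exact ⟨[c', b'], by simp [*], .ltS hb2 hc2⟩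
  case ltSS m n m' n' h1 h2 =>
    obtain ⟨x', _, hx, ⟨y', _, hy, rfl, rfl⟩, rfl⟩ := hes
    obtain ⟨b', hb1, hb2⟩ := hS _ _ _ h1 hx
    obtain ⟨c', hc1, hc2⟩ := hS _ _ _ h2 hy
    exact ⟨[c', b'], by simp [*], .ltSS hb2 hc2⟩
  case lh0 s hb =>
    subst hes
    obtain ⟨b', hb1, hb2⟩ := hK _ _ hb
    exact ⟨[b'], by simp [*], .lh0 hb2⟩
  case lhS x s' s h1 =>
    obtain ⟨x', _, hx, ⟨y', _, hy, rfl, rfl⟩, rfl⟩ := hes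
    obtain ⟨b', hb1, hb2⟩ := hC _ _ _ _ _ h1 hx hy
    exact ⟨[b'], by simp [*], .lhS hb2⟩
  case get0 x s' s n h1 h2 =>
    obtain ⟨x', _, hx, ⟨y', _, hy, rfl, rfl⟩, rfl⟩ := hes
    obtain ⟨b', hb1, hb2⟩ := hC _ _ _ _ _ h1 hx hy
    obtain ⟨c', hc1, hc2⟩ := hK _ _ h2
    exact ⟨[c', b'], by simp [*], .get0 hb2 hc2⟩
  case getS x s' s n n' h1 h2 =>
    obtain ⟨x', _, hx, ⟨y', _, hy, ⟨z', _, hz, rfl, rfl⟩, rfl⟩, rfl⟩ := hes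
    obtain ⟨b', hb1, hb2⟩ := hC _ _ _ _ _ h1 hx hy
    obtain ⟨c', hc1, hc2⟩ := hS _ _ _ h2 hz
    exact ⟨[c', b'], by simp [*], .getS hb2 hc2⟩
  case cat0 s t hb =>
    obtain ⟨x', _, hx, rfl, rfl⟩ := hes
    obtain ⟨b', hb1, hb2⟩ := hK _ _ hb
    exact ⟨[x', b'], by simp [*], .cat0 hb2⟩
  case catS x s' s t h1 =>
    obtain ⟨x', _, hx, ⟨y', _, hy, ⟨z', _, hz, rfl, rfl⟩, rfl⟩, rfl⟩ := hes
    obtain ⟨b', hb1, hb2⟩ := hC _ _ _ _ _ h1 hx hy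
    exact ⟨[z', b'], by simp [*], .catS hb2⟩
  case rec0 x f n hb =>
    obtain ⟨x', _, hx, ⟨y', _, hy, rfl, rfl⟩, rfl⟩ := hes
    obtain ⟨b', hb1, hb2⟩ := hK _ _ hb
    exact ⟨[b', y', x'], by simp [*], .rec0 hb2⟩
  case recS x f n n' h1 =>
    obtain ⟨x', _, hx, ⟨y', _, hy, ⟨z', _, hz, rfl, rfl⟩, rfl⟩, rfl⟩ := hes
    obtain ⟨c', hc1, hc2⟩ := hS _ _ _ h1 hz
    exact ⟨[c', y', x'], by simp [*], .recS hc2⟩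
  case phi =>
    obtain ⟨x', _, hx, ⟨y', _, hy, ⟨z', _, hz, rfl, rfl⟩, rfl⟩, rfl⟩ := hes
    exact ⟨[z', y', x'], by simp [*], .phi⟩
  case psiT y g s k b hb =>
    obtain ⟨x', _, hx, ⟨y', _, hy, ⟨z', _, hz, ⟨k', _, hk, rfl, rfl⟩, rfl⟩, rfl⟩, rfl⟩ := hes
    obtain ⟨b', hb1, hb2⟩ := hK _ _ hb
    exact ⟨[b', k', z', y', x'], by simp [*], .psiT hb2⟩
  case psiF y g s k b hb =>
    obtain ⟨x', _, hx, ⟨y', _, hy, ⟨z', _, hz, ⟨k', _, hk, rfl, rfl⟩, rfl⟩, rfl⟩, rfl⟩ := hes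
    obtain ⟨b', hb1, hb2⟩ := hK _ _ hb
    exact ⟨[b', k', z', y', x'], by simp [*], .psiF hb2⟩

/-! ### Reduction of de Bruijn terms -/

def apps (M : DB) : List DB → DB
  | [] => M
  | N :: l => .app (apps M l) N

def KD (a : FCO) (M : DB) : Prop := M = .k0 a
def SuD (N M : DB) : Prop := M = .k1 N
def CoD (N K M : DB) : Prop := M = .k2 N K

def MtD : MC → List DB → DB → List DB → Prop := Mt KD SuD CoD

def env (l : List DB) (x : ℕ) : DB := l.getD x (.k0 .tt)

inductive St : DB → DB → Prop where
  | beta (B N : DB) : St (.app (.lam B) N) (sb (scons N .var) B)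
  | rule {M c l rhs es} : M = apps (.cst c) l → MtD c l rhs es → St M (sb (env es) rhs)
  | appL {M M' N} : St M M' → St (.app M N) (.app M' N)
  | appR {M N N'} : St N N' → St (.app M N) (.app M N')
  | lam {M M'} : St M M' → St (.lam M) (.lam M')
  | k1 {M M'} : St M M' → St (.k1 M) (.k1 M')
  | k2L {M M' N} : St M M' → St (.k2 M N) (.k2 M' N)
  | k2R {M N N'} : St N N' → St (.k2 M N) (.k2 M N')

theorem sb_apps (s : ℕ → DB) (M : DB) (l : List DB) :
    sb s (apps M l) = apps (sb s M) (l.map (sb s)) := by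
  induction l with
  | nil => rfl
  | cons N l ih => simp [apps, sb, ih]

theorem sb_env (s : ℕ → DB) (l : List DB) (x : ℕ) : sb s (env l x) = env (l.map (sb s)) x := by
  induction l generalizing x with
  | nil => simp [env, sb]
  | cons a l ih =>
    cases x with
    | zero => simp [env]
    | succ x => simpa [env] using ih x

theorem MtD.sb {c l rhs es} (h : MtD c l rhs es) (s : ℕ → DB) :
    MtD c (l.map (sb s)) rhs (es.map (sb s)) := by
  obtain ⟨l', h1, h2⟩ := Mt.sim (K' := KD) (Su' := SuD) (Co' := CoD)
    (fun y x => y = Pf.sb s x)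
    (fun a x hx => ⟨_, rfl, by simp [KD] at *; simp [hx, Pf.sb]⟩)
    (fun e x e' hx he => ⟨_, rfl, by simp [SuD] at *; simp [hx, he, Pf.sb]⟩)
    (fun e d x e' d' hx he hd => ⟨_, rfl, by simp [CoD] at *; simp [hx, he, hd, Pf.sb]⟩)
    h (es' := es.map (Pf.sb s)) (by
      rw [List.forall₂_map_left_iff]
      exact List.forall₂_same.2 fun _ _ => rfl)
  have : l' = l.map (Pf.sb s) := by
    clear h2 h
    induction h1 with
    | nil => rfl
    | cons h _ ih => simp [h, ih]
  subst this
  exact h2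

theorem St.sb {M M' : DB} (h : St M M') : ∀ s, St (sb s M) (sb s M') := by
  induction h with
  | beta B N => intro s; rw [sb_inst]; exact St.beta _ _
  | rule hM h =>
    intro s
    subst hM
    rw [sb_apps, sb_sb]
    have := St.rule (M := apps (DB.cst _) _) rfl (h.sb s)
    simpa only [Pf.sb, sb_env] using this
  | appL _ ih => intro s; exact .appL (ih s)
  | appR _ ih => intro s; exact .appR (ih s)
  | lam _ ih => intro s; exact .lam (ih _)
  | k1 _ ih => intro s; exact .k1 (ih s)
  | k2L _ ih => intro s; exact .k2L (ih s)
  | k2R _ ih => intro s; exact .k2R (ih s)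

/-! ### Translation of named terms -/

def dbc : (co : FCO) → (Fin (fArity co) → DB) → DB
  | .tt, _ => .k0 .tt
  | .ff, _ => .k0 .ff
  | .zero, _ => .k0 .zero
  | .nil, _ => .k0 .nil
  | .succ, g => .k1 (g (0 : Fin 1))
  | .cons, g => .k2 (g (0 : Fin 2)) (g (1 : Fin 2))

def ext (f : ℕ → ℕ) (x : ℕ) : ℕ → ℕ := fun y => if y = x then 0 else f y + 1

def db : Tm FCO fArity MC → (ℕ → ℕ) → DB
  | .var x, f => .var (f x)
  | .cst c, _ => .cst c
  | .con co g, f => dbc co fun i => db (g i) f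
  | .lam x M, f => .lam (db M (ext f x))
  | .app M N, f => .app (db M f) (db N f)

theorem rn_dbc (r : ℕ → ℕ) (co : FCO) (g : Fin (fArity co) → DB) :
    rn r (dbc co g) = dbc co fun i => rn r (g i) := by
  cases co <;> rfl

theorem sb_dbc (s : ℕ → DB) (co : FCO) (g : Fin (fArity co) → DB) :
    sb s (dbc co g) = dbc co fun i => sb s (g i) := by
  cases co <;> rfl

theorem db_rn (M : Tm FCO fArity MC) : ∀ (f f' r : ℕ → ℕ), (∀ x ∈ FV M, f' x = r (f x)) →
    db M f' = rn r (db M f) := by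
  induction M with
  | var x => intro f f' r h; simp [db, rn, h x (by simp [FV])]
  | cst c => intros; rfl
  | con co g ih =>
    intro f f' r h
    simp only [db, rn_dbc]
    congr 1
    funext i
    exact ih i f f' r fun x hx => h x (by simp [FV]; exact ⟨i, hx⟩)
  | lam x M ih =>
    intro f f' r h
    simp only [db, rn]
    congr 1
    apply ih
    intro y hy
    by_cases hyx : y = x
    · simp [ext, hyx, upr]
    · simp [ext, hyx, upr, h y (by simp [FV, hy, hyx])]
  | app M N ihM ihN =>
    intro f f' r h
    simp only [db, rn]
    rw [ihM f f' r fun x hx => h x (by simp [FV, hx]),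
      ihN f f' r fun x hx => h x (by simp [FV, hx])]

theorem freshVar_not_mem (s : Finset ℕ) : freshVar s ∉ s := by
  intro h
  have h1 : id (freshVar s) ≤ s.sup id := Finset.le_sup (f := id) h
  have h2 : freshVar s = s.sup id + 1 := rfl
  rw [id, h2] at h1
  omega

theorem db_subst (M : Tm FCO fArity MC) : ∀ (σ : ℕ → Tm FCO fArity MC) (f g : ℕ → ℕ)
    (τ : ℕ → DB), (∀ x ∈ FV M, τ (g x) = db (σ x) f) →
    db (subst M σ) f = sb τ (db M g) := by
  induction M with
  | var x => intro σ f g τ h; simp [db, sb, subst, h x (by simp [FV])]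
  | cst c => intros; rfl
  | con co k ih =>
    intro σ f g τ h
    simp only [db, subst, sb_dbc]
    congr 1
    funext i
    exact ih i _ _ _ _ fun x hx => h x (by simp [FV]; exact ⟨i, hx⟩)
  | lam y M ih =>
    intro σ f g τ h
    simp only [db, subst, sb]
    congr 1
    set z := freshVar ((FV M \ {y}).biUnion fun x => FV (σ x)) with hz
    have hf : z ∉ (FV M \ {y}).biUnion fun x => FV (σ x) := freshVar_not_mem _
    apply ih
    intro x hx
    by_cases hxy : x = y
    · subst hxy
      simp [ext, ups, db]
    · have hx' : x ∈ FV M \ {y} := by simp [hx, hxy]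
      simp only [ext, hxy, if_false, ups, Function.update_of_ne, ne_eq, not_false_eq_true]
      rw [h x (by simpa [FV] using hx')]
      symm
      apply db_rn
      intro w hw
      have : w ≠ z := by
        rintro rfl
        exact hf (Finset.mem_biUnion.2 ⟨x, hx', hw⟩)
      simp [this, ext]
  | app M N ihM ihN =>
    intro σ f g τ h
    simp only [db, sb, subst]
    rw [ihM _ _ _ _ fun x hx => h x (by simp [FV, hx]),
      ihN _ _ _ _ fun x hx => h x (by simp [FV, hx])]

theorem db_rule (r : Rule FCO fArity MC) (hr : r ∈ MBR) (σ : ℕ → Tm FCO fArity MC) (f : ℕ → ℕ) :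
    St (db (appList (.cst r.head) (r.pats.map (Pat.substT σ))) f) (db (subst r.rhs σ) f) := by
  rw [db_subst r.rhs σ f id (fun x => db (σ x) f) fun _ _ => rfl]
  simp only [MBR, mbrList, Set.mem_ofPred_eq, List.mem_cons, List.not_mem_nil, or_false] at hr
  rcases hr with rfl | rfl | rfl | rfl | rfl | rfl | rfl | rfl | rfl | rfl | rfl | rfl | rfl |
    rfl | rfl | rfl
  · exact St.rule (l := [_, _, _]) rfl (Mt.ifT rfl)
  · exact St.rule (l := [_, _, _]) rfl (Mt.ifF rfl)
  · exact St.rule (l := [_, _]) rfl (Mt.lt0 rfl)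
  · exact St.rule (l := [_, _]) rfl (Mt.ltS rfl rfl)
  · exact St.rule (l := [_, _]) rfl (Mt.ltSS rfl rfl)
  · exact St.rule (l := [_]) rfl (Mt.lh0 rfl)
  · exact St.rule (l := [_]) rfl (Mt.lhS (x := db (σ 0) f) rfl)
  · exact St.rule (l := [_, _]) rfl (Mt.get0 rfl rfl)
  · exact St.rule (l := [_, _]) rfl (Mt.getS (x := db (σ 0) f) rfl rfl)
  · exact St.rule (l := [_, _]) rfl (Mt.cat0 rfl)
  · exact St.rule (l := [_, _]) rfl (Mt.catS rfl)
  · exact St.rule (l := [_, _, _]) rfl (Mt.rec0 rfl)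
  · exact St.rule (l := [_, _, _]) rfl (Mt.recS rfl)
  · exact St.rule (l := [_, _, _]) rfl Mt.phi
  · exact St.rule (l := [_, _, _, _, _]) rfl (Mt.psiT (y := db (σ 0) f) (g := db (σ 1) f) rfl)
  · exact St.rule (l := [_, _, _, _, _]) rfl (Mt.psiF rfl)

theorem db_step {M M' : Tm FCO fArity MC} (h : Step MBR M M') :
    ∀ f, St (db M f) (db M' f) := by
  induction h with
  | beta x M N =>
    intro f
    have : db (subst1 M x N) f = sb (scons (db N f) .var) (db M (ext f x)) := by
      apply db_subst
      intro y _
      by_cases hy : y = x <;> simp [ext, hy, scons, db]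
    rw [this]
    exact St.beta _ _
  | rule r hr σ => intro f; exact db_rule r hr σ f
  | appL _ ih => intro f; exact .appL (ih f)
  | appR _ ih => intro f; exact .appR (ih f)
  | lamC x _ ih => intro f; exact .lam (ih _)
  | @conC co g i M' _ ih =>
    intro f
    cases co with
    | tt => exact i.elim0
    | ff => exact i.elim0
    | zero => exact i.elim0
    | nil => exact i.elim0
    | succ =>
      change Fin 1 at i
      obtain rfl : i = 0 := Subsingleton.elim _ _
      have e : DB.k1 (db (Function.update g (0 : Fin 1) M' (0 : Fin 1)) f) = DB.k1 (db M' f) :=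
        congrArg (fun T => DB.k1 (db T f)) (Function.update_self _ _ _)
      exact Eq.mpr (congrArg (St _) e) (St.k1 (ih f))
    | cons =>
      change Fin 2 at i
      have h01 : (1 : Fin 2) ≠ (0 : Fin 2) := by decide
      match i with
      | 0 =>
        have e : DB.k2 (db (Function.update g (0 : Fin 2) M' (0 : Fin 2)) f)
            (db (Function.update g (0 : Fin 2) M' (1 : Fin 2)) f) =
            DB.k2 (db M' f) (db (g (1 : Fin 2)) f) :=
          congrArg₂ (fun T U => DB.k2 (db T f) (db U f)) (Function.update_self _ _ _)
            (Function.update_of_ne h01 _ _)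
        exact Eq.mpr (congrArg (St _) e) (St.k2L (ih f))
      | 1 =>
        have e : DB.k2 (db (Function.update g (1 : Fin 2) M' (0 : Fin 2)) f)
            (db (Function.update g (1 : Fin 2) M' (1 : Fin 2)) f) =
            DB.k2 (db (g (0 : Fin 2)) f) (db M' f) :=
          congrArg₂ (fun T U => DB.k2 (db T f) (db U f)) (Function.update_of_ne h01.symm _ _)
            (Function.update_self _ _ _)
        exact Eq.mpr (congrArg (St _) e) (St.k2R (ih f))

def Sn (M : DB) : Prop := Acc (fun N M => St M N) M

theorem sn_of_db (M : Tm FCO fArity MC) (f : ℕ → ℕ) (h : Sn (db M f)) : SN MBR M := by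
  have := InvImage.accessible (fun M => db M f) h
  exact Subrelation.accessible (fun {a b} (h : Step MBR b a) => db_step h f) this

end Pf
end SNPaper
namespace SNPaper
namespace Pf

/-! ### Strict intersection types (finite elements of the domain) -/

inductive Ty : Type where
  | star : Ty
  | k0 : FCO → Ty
  | succ : (n : ℕ) → (Fin (n + 1) → Ty) → Ty
  | cons : (n : ℕ) → (Fin (n + 1) → Ty) → (m : ℕ) → (Fin (m + 1) → Ty) → Ty
  | arr : (n : ℕ) → (Fin (n + 1) → Ty) → Ty → Ty

/-- Finite nonempty families of types. -/
abbrev I : Type := Σ n : ℕ, (Fin (n + 1) → Ty)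

def rg (S : I) : Set Ty := Set.range S.2

def arrs : List I → Ty → Ty
  | [], σ => σ
  | S :: l, σ => arrs l (.arr S.1 S.2 σ)

def StI (S : I) : Prop := Ty.star ∈ rg S
def KI (a : FCO) (S : I) : Prop := Ty.k0 a ∈ rg S
def SuI (E S : I) : Prop := ∃ E' : I, Ty.succ E'.1 E'.2 ∈ rg S ∧ rg E ⊆ rg E'
def CoI (E F S : I) : Prop := Ty.cons E.1 E.2 F.1 F.2 ∈ rg S

def envT (l : List (Set Ty)) (x : ℕ) : Set Ty := l.getD x ∅

inductive Typ : (ℕ → Set Ty) → DB → Ty → Prop where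
  | var {η x σ} : σ ∈ η x → Typ η (.var x) σ
  | lam {η M n S σ} : Typ (scons (Set.range S) η) M σ → Typ η (.lam M) (.arr n S σ)
  | app {η M N n S σ} : Typ η M (.arr n S σ) → (∀ i, Typ η N (S i)) → Typ η (.app M N) σ
  | appS {η M N τ} : Typ η M .star → Typ η N τ → Typ η (.app M N) .star
  | k0 {η a} : Typ η (.k0 a) (.k0 a)
  | k1 {η M n S} : (∀ i, Typ η M (S i)) → Typ η (.k1 M) (.succ n S)
  | k2 {η M N n S m T} : (∀ i, Typ η M (S i)) → (∀ i, Typ η N (T i)) →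
      Typ η (.k2 M N) (.cons n S m T)
  | rule {η c Ss rhs Es σ} : Mt KI SuI CoI c Ss rhs Es → Typ (envT (Es.map rg)) rhs σ →
      Typ η (.cst c) (arrs Ss σ)
  | stuck {η c Ss} : Ms StI KI SuI CoI c Ss → Typ η (.cst c) (arrs Ss .star)

/-! ### Reducibility -/

theorem apps_inj {c c' : MC} : ∀ {l l' : List DB}, apps (.cst c) l = apps (.cst c') l' →
    c = c' ∧ l = l'
  | [], [], h => by simpa [apps] using h
  | [], _ :: _, h => by simp [apps] at h
  | _ :: _, [], h => by simp [apps] at h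
  | a :: l, b :: l', h => by
    simp only [apps, DB.app.injEq] at h
    obtain ⟨h1, h2⟩ := apps_inj h.1
    exact ⟨h1, by rw [h2, h.2]⟩

theorem apps_ne_lam {c : MC} {l : List DB} {B : DB} : apps (.cst c) l ≠ .lam B := by
  cases l <;> simp [apps]

def Neut (M : DB) : Prop :=
  (∀ B, M ≠ .lam B) ∧ (∀ a, M ≠ .k0 a) ∧ (∀ N, M ≠ .k1 N) ∧ (∀ N K, M ≠ .k2 N K) ∧
    ∀ c l, M = apps (.cst c) l → ar c ≤ l.length

theorem Neut.app {M : DB} (h : Neut M) (N : DB) : Neut (.app M N) := by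
  refine ⟨by simp, by simp, by simp, by simp, ?_⟩
  intro c l e
  cases l with
  | nil => simp [apps] at e
  | cons a l =>
    simp only [apps, DB.app.injEq] at e
    have := h.2.2.2.2 c l e.1
    simp
    omega

theorem neut_beta (B N : DB) : Neut (.app (.lam B) N) := by
  refine ⟨by simp, by simp, by simp, by simp, ?_⟩
  intro c l e
  cases l with
  | nil => simp [apps] at e
  | cons a l =>
    simp only [apps, DB.app.injEq] at e
    exact absurd e.1.symm apps_ne_lam

theorem neut_var (n : ℕ) : Neut (.var n) := by
  refine ⟨by simp, by simp, by simp, by simp, ?_⟩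
  intro c l e
  cases l <;> simp [apps] at e

theorem neut_apps {c : MC} {l : List DB} (h0 : 0 < l.length) (h : ar c ≤ l.length) :
    Neut (apps (.cst c) l) := by
  cases l with
  | nil => simp at h0
  | cons a l =>
    refine ⟨by simp [apps], by simp [apps], by simp [apps], by simp [apps], ?_⟩
    intro c' l' e
    obtain ⟨rfl, rfl⟩ := apps_inj e
    exact h

theorem Neut.step_app {M N t : DB} (h : Neut M) (hs : St (.app M N) t) :
    (∃ M', St M M' ∧ t = .app M' N) ∨ (∃ N', St N N' ∧ t = .app M N') := by
  cases hs with
  | beta B => exact absurd rfl (h.1 B)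
  | @rule _ c l _ _ e hm =>
    cases l with
    | nil => simp [apps] at e
    | cons a l =>
      simp only [apps, DB.app.injEq] at e
      have h1 := h.2.2.2.2 c l e.1
      have h2 := Mt.len hm
      simp at h2
      omega
  | appL h => exact .inl ⟨_, h, rfl⟩
  | appR h => exact .inr ⟨_, h, rfl⟩

abbrev Rt : DB → DB → Prop := Relation.ReflTransGen St

def SNQ (Q : DB → Prop) (M : DB) : Prop := Sn M ∧ ∀ M', Rt M M' → Q M'

structure CR (P : DB → Prop) : Prop where
  sn : ∀ M, P M → Sn M
  step : ∀ M M', P M → St M M' → P M'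
  exp : ∀ M, Neut M → (∀ M', St M M' → P M') → P M

theorem snq_cr {Q : DB → Prop} (hQ : ∀ M, Neut M → Q M) : CR (SNQ Q) where
  sn _ h := h.1
  step _ _ h hs := ⟨h.1.inv hs, fun _ hr => h.2 _ (.head hs hr)⟩
  exp M hn h := ⟨Acc.intro _ fun _ hs => (h _ hs).1, fun M' hr => by
    rcases Relation.ReflTransGen.cases_head hr with rfl | ⟨K, h1, h2⟩
    · exact hQ _ hn
    · exact (h K h1).2 _ h2⟩

def R : Ty → DB → Prop
  | .star => SNQ Neut
  | .k0 a => SNQ fun M => (∀ b, M = .k0 b → b = a) ∧ (∀ N, M ≠ .k1 N) ∧ (∀ N K, M ≠ .k2 N K)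
  | .succ n S => SNQ fun M =>
      (∀ b, M ≠ .k0 b) ∧ (∀ N, M = .k1 N → ∀ i : Fin (n + 1), R (S i) N) ∧ (∀ N K, M ≠ .k2 N K)
  | .cons n S m T => SNQ fun M =>
      (∀ b, M ≠ .k0 b) ∧ (∀ N, M ≠ .k1 N) ∧ (∀ N K, M = .k2 N K →
        (∀ i : Fin (n + 1), R (S i) N) ∧ (∀ i : Fin (m + 1), R (T i) K))
  | .arr n S σ => fun M => ∀ N, (∀ i : Fin (n + 1), R (S i) N) → R σ (.app M N)

theorem sn_app_left {M N : DB} (h : Sn (.app M N)) : Sn M := by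
  have := InvImage.accessible (fun M => DB.app M N) h
  exact Subrelation.accessible (fun {a b} (h : St b a) => St.appL h) this

theorem sn_of_sb {M : DB} (s : ℕ → DB) (h : Sn (sb s M)) : Sn M := by
  have := InvImage.accessible (fun M => sb s M) h
  exact Subrelation.accessible (fun {a b} (h : St b a) => St.sb h s) this

theorem st_var {n : ℕ} {t : DB} (h : St (.var n) t) : False := by
  cases h with
  | @rule _ c l _ _ e _ => cases l <;> simp [apps] at e

theorem CR.var {P : DB → Prop} (h : CR P) (n : ℕ) : P (.var n) :=
  h.exp _ (neut_var n) fun _ hs => (st_var hs).elim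

theorem R_cr (σ : Ty) : CR (R σ) := by
  induction σ with
  | star => exact snq_cr fun _ h => h
  | k0 a => exact snq_cr fun _ h => ⟨fun b hb => absurd hb (h.2.1 b), h.2.2.1, h.2.2.2.1⟩
  | succ n S ih =>
    exact snq_cr fun _ h => ⟨h.2.1, fun b hb => absurd hb (h.2.2.1 b), h.2.2.2.1⟩
  | cons n S m T ih1 ih2 =>
    exact snq_cr fun _ h => ⟨h.2.1, h.2.2.1, fun b c hb => absurd hb (h.2.2.2.1 b c)⟩
  | arr n S σ ihS ih =>
    refine ⟨?_, ?_, ?_⟩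
    · intro M h
      exact sn_app_left (ih.sn _ (h (.var 0) fun i => (ihS i).var 0))
    · intro M M' h hs N hN
      exact ih.step _ _ (h N hN) (.appL hs)
    · intro M hn h N hN
      have hsn : Sn N := (ihS 0).sn _ (hN 0)
      induction hsn with
      | intro N _ ihN =>
        refine ih.exp _ (hn.app N) ?_
        intro t ht
        rcases hn.step_app ht with ⟨M', h1, rfl⟩ | ⟨N', h1, rfl⟩
        · exact h M' h1 N hN
        · exact ihN N' h1 fun i => (ihS i).step _ _ (hN i) h1

/-- Reducibility for families. -/
def RI (S : I) (N : DB) : Prop := ∀ i, R (S.2 i) N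

theorem RI.mem {S : I} {N : DB} (h : RI S N) {σ : Ty} (hσ : σ ∈ rg S) : R σ N := by
  obtain ⟨i, rfl⟩ := hσ
  exact h i

theorem RI.sn {S : I} {N : DB} (h : RI S N) : Sn N := (R_cr _).sn _ (h 0)

theorem RI.step {S : I} {N N' : DB} (h : RI S N) (hs : St N N') : RI S N' :=
  fun i => (R_cr _).step _ _ (h i) hs

section Clash
variable {S E F : I} {a b : FCO} {N K : DB}

theorem RI.kk (h : RI S (.k0 b)) (hK : KI a S) : b = a := ((h.mem hK).2 _ .refl).1 b rfl
theorem RI.ks (h : RI S (.k1 N)) (hK : KI a S) : False := ((h.mem hK).2 _ .refl).2.1 N rfl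
theorem RI.kc (h : RI S (.k2 N K)) (hK : KI a S) : False := ((h.mem hK).2 _ .refl).2.2 N K rfl
theorem RI.sk (h : RI S (.k0 b)) (hK : SuI E S) : False := by
  obtain ⟨E', h1, _⟩ := hK
  exact ((h.mem h1).2 _ .refl).1 b rfl
theorem RI.ss (h : RI S (.k1 N)) (hK : SuI E S) : RI E N := by
  obtain ⟨E', h1, h2⟩ := hK
  have h3 : RI E' N := ((h.mem h1).2 _ .refl).2.1 N rfl
  exact fun i => h3.mem (h2 ⟨i, rfl⟩)
theorem RI.ck (h : RI S (.k0 b)) (hK : CoI E F S) : False := ((h.mem hK).2 _ .refl).1 b rfl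
theorem RI.cs (h : RI S (.k1 N)) (hK : CoI E F S) : False := ((h.mem hK).2 _ .refl).2.1 N rfl
theorem RI.cc (h : RI S (.k2 N K)) (hK : CoI E F S) : RI E N ∧ RI F K :=
  ((h.mem hK).2 _ .refl).2.2 N K rfl
theorem RI.tk (h : RI S (.k0 b)) (hK : StI S) : False := ((h.mem hK).2 _ .refl).2.1 b rfl
theorem RI.ts (h : RI S (.k1 N)) (hK : StI S) : False := ((h.mem hK).2 _ .refl).2.2.1 N rfl
theorem RI.tc (h : RI S (.k2 N K)) (hK : StI S) : False :=
  ((h.mem hK).2 _ .refl).2.2.2.1 N K rfl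

end Clash

theorem mt_agree {c Ss rhs Es Ns rhs' es} (h : Mt KI SuI CoI c Ss rhs Es)
    (h' : MtD c Ns rhs' es) (hR : List.Forall₂ RI Ss Ns) :
    rhs' = rhs ∧ List.Forall₂ RI Es es := by
  unfold MtD at h'
  cases h <;> cases h' <;>
    simp only [List.forall₂_cons, List.Forall₂.nil, KD, SuD, CoD, and_true] at * <;>
    subst_vars <;>
    first
    | (obtain ⟨h1, h2, h3, h4, h5⟩ := hR; first
        | exact ⟨trivial, h5, h4, h3, h2⟩
        | exact absurd (h1.kk ‹_›) (by decide))
    | (obtain ⟨h1, h2, h3⟩ := hR; first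
        | exact ⟨trivial, h2, h1⟩
        | exact absurd (h3.kk ‹_›) (by decide)
        | exact ⟨trivial, h3, h2⟩
        | exact ⟨trivial, h3, h2, h1.ss ‹_›⟩
        | exact (h1.ks ‹_›).elim
        | exact (h1.sk ‹_›).elim
        | exact ⟨trivial, h3, h2, h1⟩)
    | (obtain ⟨h1, h2⟩ := hR; first
        | exact (h1.ks ‹_›).elim
        | exact (h1.sk ‹_›).elim
        | exact (h2.ks ‹_›).elim
        | exact (h2.sk ‹_›).elim
        | exact (h2.kc ‹_›).elim
        | exact (h2.ck ‹_›).elim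
        | exact ⟨trivial, h2.ss ‹_›, h1.ss ‹_›⟩
        | exact ⟨trivial, (h2.cc ‹_›).1, (h2.cc ‹_›).2, h1.ss ‹_›⟩
        | exact ⟨trivial, (h2.cc ‹_›).1, (h2.cc ‹_›).2, h1⟩
        | exact ⟨trivial, (h2.cc ‹_›).1, (h2.cc ‹_›).2⟩
        | exact ⟨trivial, h1.ss ‹_›⟩
        | exact ⟨trivial, h2⟩
        | exact ⟨trivial, h1⟩)
    | exact (hR.kc ‹_›).elim
    | exact (hR.ck ‹_›).elim
    | exact ⟨trivial, hR.cc ‹_›⟩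

theorem ms_agree {c Ss Ns rhs' es} (h : Ms StI KI SuI CoI c Ss)
    (h' : MtD c Ns rhs' es) (hR : List.Forall₂ RI Ss Ns) : False := by
  unfold MtD at h'
  cases h <;> cases h' <;>
    simp only [List.forall₂_cons, List.Forall₂.nil, KD, SuD, CoD, and_true] at * <;>
    subst_vars <;>
    first
    | exact hR.1.tk ‹_›
    | exact hR.1.ts ‹_›
    | exact hR.1.tc ‹_›
    | exact hR.1.sk ‹_›
    | exact hR.2.tk ‹_›
    | exact hR.2.ts ‹_›
    | exact hR.2.tc ‹_›
    | exact hR.2.kc ‹_›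
    | exact hR.2.2.tk ‹_›
    | exact hR.tk ‹_›
    | exact hR.tc ‹_›

inductive LSt : List DB → List DB → Prop where
  | head {N N' l} : St N N' → LSt (N :: l) (N' :: l)
  | tail {N l l'} : LSt l l' → LSt (N :: l) (N :: l')

theorem lst_acc : ∀ {l : List DB}, (∀ N ∈ l, Sn N) → Acc (fun l' l => LSt l l') l := by
  intro l
  induction l with
  | nil => intro _; exact Acc.intro _ fun _ h => by cases h
  | cons N l ih =>
    intro h
    have hN : Sn N := h N (by simp)
    have hl := ih fun K hK => h K (by simp [hK])
    clear h ih
    induction hN generalizing l with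
    | intro N hN' ihN =>
      induction hl with
      | intro l hl' ihl =>
        refine Acc.intro _ ?_
        intro t ht
        cases ht with
        | head hs => exact ihN _ hs _ (Acc.intro _ hl')
        | tail hs => exact ihl _ hs

theorem st_apps {c : MC} : ∀ {l : List DB} {t : DB}, l.length ≤ ar c → St (apps (.cst c) l) t →
    (∃ l', LSt l l' ∧ t = apps (.cst c) l') ∨ (∃ rhs es, MtD c l rhs es ∧ t = sb (env es) rhs) := by
  intro l
  induction l with
  | nil =>
    intro t _ h
    cases h with
    | rule e hm =>
      obtain ⟨rfl, rfl⟩ := apps_inj (l := []) e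
      exact .inr ⟨_, _, hm, rfl⟩
  | cons N l ih =>
    intro t hl h
    simp only [apps] at h
    generalize hM : apps (.cst c) l = M at h
    cases h with
    | beta B => exact absurd hM apps_ne_lam
    | rule e hm =>
      subst hM
      obtain ⟨rfl, rfl⟩ := apps_inj (l := N :: l) e
      exact .inr ⟨_, _, hm, rfl⟩
    | appL hs =>
      subst hM
      simp at hl
      rcases ih (by omega) hs with ⟨l', h1, rfl⟩ | ⟨rhs, es, hm, _⟩
      · exact .inl ⟨_, .tail h1, rfl⟩
      · have := Mt.len hm
        omega
    | appR hs =>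
      subst hM
      exact .inl ⟨_, .head hs, rfl⟩

theorem forall2_step {Ss : List I} {l l' : List DB} (h : List.Forall₂ RI Ss l) (hs : LSt l l') :
    List.Forall₂ RI Ss l' := by
  induction hs generalizing Ss with
  | head hs =>
    cases h with
    | cons h1 h2 => exact .cons (h1.step hs) h2
  | tail _ ih =>
    cases h with
    | cons h1 h2 => exact .cons h1 (ih h2)

theorem R_arrs {Ss : List I} : ∀ {σ : Ty} {M : DB},
    (∀ l, List.Forall₂ RI Ss l → R σ (apps M l)) → R (arrs Ss σ) M := by
  induction Ss with
  | nil => intro σ M h; exact h [] .nil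
  | cons S Ss ih =>
    intro σ M h
    apply ih
    intro l hl N hN
    exact h (N :: l) (.cons hN hl)

theorem ar_pos (c : MC) : 0 < ar c := by cases c <;> simp [ar]

theorem R_apps {c : MC} {Ss : List I} {σ : Ty} (hlen : Ss.length = ar c)
    (hred : ∀ l rhs es, List.Forall₂ RI Ss l → MtD c l rhs es → R σ (sb (env es) rhs)) :
    R (arrs Ss σ) (.cst c) := by
  apply R_arrs
  intro l hl
  have hacc : Acc (fun l' l => LSt l l') l := by
    apply lst_acc
    clear hred hlen
    induction hl with
    | nil => simp
    | cons h _ ih =>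
      intro N hN
      rcases List.mem_cons.1 hN with rfl | hN
      · exact h.sn
      · exact ih N hN
  induction hacc with
  | intro l _ ih =>
    have hl' : l.length = ar c := by rw [← hl.length_eq, hlen]
    refine (R_cr σ).exp _ (neut_apps (by rw [hl']; exact ar_pos c) hl'.ge) ?_
    intro t ht
    rcases st_apps hl'.le ht with ⟨l', h1, rfl⟩ | ⟨rhs, es, hm, rfl⟩
    · exact ih l' h1 (forall2_step hl h1)
    · exact hred l rhs es hl hm

theorem R_lam {n : ℕ} {S : Fin (n + 1) → Ty} {σ : Ty} {B : DB}
    (h : ∀ N, (∀ i, R (S i) N) → R σ (sb (scons N .var) B)) : R (.arr n S σ) (.lam B) := by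
  have hB : Sn B := sn_of_sb _ ((R_cr σ).sn _ (h (.var 0) fun i => (R_cr _).var 0))
  intro N hN
  have hNs : Sn N := (R_cr _).sn _ (hN 0)
  induction hB generalizing N with
  | intro B hB' ihB =>
    induction hNs with
    | intro N _ ihN =>
      refine (R_cr σ).exp _ (neut_beta B N) ?_
      intro t ht
      generalize hM : DB.lam B = M at ht
      cases ht with
      | beta B' =>
        obtain rfl : B = B' := by simpa using hM
        exact h N hN
      | @rule _ c l _ _ e hm =>
        cases l with
        | nil => simp [apps] at e
        | cons a l =>
          simp only [apps, DB.app.injEq] at e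
          exact absurd (e.1.symm.trans hM.symm) apps_ne_lam
      | appL hs =>
        subst hM
        cases hs with
        | @rule _ c l _ _ e hm => exact absurd e.symm apps_ne_lam
        | lam hs =>
          exact ihB _ hs (fun K hK => (R_cr σ).step _ _ (h K hK) (hs.sb _)) N hN
            ((R_cr _).sn _ (hN 0))
      | appR hs =>
        subst hM
        exact ihN _ hs fun i => (R_cr _).step _ _ (hN i) hs

theorem R_star_app {M N : DB} (hM : R .star M) (hN : Sn N) : R .star (.app M N) := by
  have hMs : Sn M := hM.1
  induction hMs generalizing N with
  | intro M _ ihM =>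
    induction hN with
    | intro N hN' ihN =>
      have hn : Neut M := hM.2 _ .refl
      refine (R_cr .star).exp _ (hn.app N) ?_
      intro t ht
      rcases hn.step_app ht with ⟨M', h1, rfl⟩ | ⟨N', h1, rfl⟩
      · exact ihM M' h1 ((R_cr .star).step _ _ hM h1) (Acc.intro _ hN')
      · exact ihN N' h1

theorem st_k0 {a : FCO} {t : DB} (h : St (.k0 a) t) : False := by
  cases h with
  | @rule _ c l _ _ e _ => cases l <;> simp [apps] at e

theorem st_k1 {M t : DB} (h : St (.k1 M) t) : ∃ M', St M M' ∧ t = .k1 M' := by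
  cases h with
  | @rule _ c l _ _ e _ => cases l <;> simp [apps] at e
  | k1 h => exact ⟨_, h, rfl⟩

theorem st_k2 {M N t : DB} (h : St (.k2 M N) t) :
    (∃ M', St M M' ∧ t = .k2 M' N) ∨ (∃ N', St N N' ∧ t = .k2 M N') := by
  cases h with
  | @rule _ c l _ _ e _ => cases l <;> simp [apps] at e
  | k2L h => exact .inl ⟨_, h, rfl⟩
  | k2R h => exact .inr ⟨_, h, rfl⟩

theorem snq_intro {Q : DB → Prop} {M : DB} (h0 : Q M) (h : ∀ M', St M M' → SNQ Q M') :
    SNQ Q M :=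
  ⟨Acc.intro _ fun _ hs => (h _ hs).1, fun M' hr => by
    rcases Relation.ReflTransGen.cases_head hr with rfl | ⟨K, h1, h2⟩
    · exact h0
    · exact (h K h1).2 _ h2⟩

theorem R_k0 (a : FCO) : R (.k0 a) (.k0 a) :=
  snq_intro ⟨by simp, by simp, by simp⟩ fun _ h => (st_k0 h).elim

theorem R_k1 {S : I} {M : DB} (h : RI S M) : R (.succ S.1 S.2) (.k1 M) := by
  have hs := h.sn
  induction hs with
  | intro M _ ih =>
    refine snq_intro ⟨by simp, ?_, by simp⟩ ?_
    · intro N e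
      obtain rfl : M = N := by simpa using e
      exact h
    · intro t ht
      obtain ⟨M', h1, rfl⟩ := st_k1 ht
      exact ih M' h1 (h.step h1)

theorem R_k2 {S T : I} {M N : DB} (h : RI S M) (h' : RI T N) :
    R (.cons S.1 S.2 T.1 T.2) (.k2 M N) := by
  have hs := h.sn
  induction hs generalizing N with
  | intro M _ ihM =>
    have hs' := h'.sn
    induction hs' with
    | intro N _ ihN =>
      refine snq_intro ⟨by simp, by simp, ?_⟩ ?_
      · intro M1 N1 e
        simp only [DB.k2.injEq] at e
        obtain ⟨rfl, rfl⟩ := e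
        exact ⟨h, h'⟩
      · intro t ht
        rcases st_k2 ht with ⟨M', h1, rfl⟩ | ⟨N', h1, rfl⟩
        · exact ihM M' h1 (h.step h1) h'
        · exact ihN N' h1 (h'.step h1)

theorem env_ok : ∀ {Es : List I} {es : List DB}, List.Forall₂ RI Es es →
    ∀ x, ∀ τ ∈ envT (Es.map rg) x, R τ (env es x) := by
  intro Es es h
  induction h with
  | nil => intro x τ h; simp [envT] at h
  | cons h _ ih =>
    intro x τ hτ
    cases x with
    | zero => exact h.mem (by simpa [envT] using hτ)
    | succ x =>
      have := ih x τ (by simpa [envT] using hτ)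
      simpa [env] using this

theorem typ_R {η : ℕ → Set Ty} {M : DB} {σ : Ty} (h : Typ η M σ) :
    ∀ θ : ℕ → DB, (∀ x, ∀ τ ∈ η x, R τ (θ x)) → R σ (sb θ M) := by
  induction h with
  | var h => intro θ hθ; exact hθ _ _ h
  | lam _ ih =>
    intro θ hθ
    apply R_lam
    intro N hN
    rw [inst_ups]
    apply ih
    intro x τ hτ
    cases x with
    | zero =>
      obtain ⟨i, rfl⟩ := hτ
      exact hN i
    | succ x => exact hθ x τ hτ
  | app _ _ ih1 ih2 => intro θ hθ; exact ih1 θ hθ _ fun i => ih2 i θ hθ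
  | appS _ _ ih1 ih2 => intro θ hθ; exact R_star_app (ih1 θ hθ) ((R_cr _).sn _ (ih2 θ hθ))
  | k0 => intro θ _; exact R_k0 _
  | @k1 η M n S _ ih => intro θ hθ; exact R_k1 (S := ⟨n, S⟩) fun i => ih i θ hθ
  | @k2 η M N n S m T _ _ ih1 ih2 =>
    intro θ hθ
    exact R_k2 (S := ⟨n, S⟩) (T := ⟨m, T⟩) (fun i => ih1 i θ hθ) fun i => ih2 i θ hθ
  | rule hm _ ih =>
    intro θ _
    refine R_apps hm.len ?_
    intro l rhs es hl hm'
    obtain ⟨rfl, h2⟩ := mt_agree hm hm' hl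
    exact ih _ (env_ok h2)
  | stuck hm =>
    intro θ _
    exact R_apps hm.len fun l rhs es hl hm' => (ms_agree hm hm' hl).elim

theorem typ_sn {η : ℕ → Set Ty} {M : DB} {σ : Ty} (h : Typ η M σ) : Sn M := by
  have := typ_R h .var fun x τ _ => (R_cr τ).var x
  rw [sb_id] at this
  exact (R_cr σ).sn _ this

end Pf
end SNPaper
namespace SNPaper
namespace Pf

/-! ### The filter model -/

theorem scons_mono {a b : Set Ty} {η η' : ℕ → Set Ty} (h : a ⊆ b) (h' : ∀ x, η x ⊆ η' x) :
    ∀ x, scons a η x ⊆ scons b η' x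
  | 0 => h
  | x + 1 => h' x

theorem Typ.mono {η M σ} (h : Typ η M σ) : ∀ {η' : ℕ → Set Ty}, (∀ x, η x ⊆ η' x) → Typ η' M σ := by
  induction h with
  | var h => intro η' hη; exact .var (hη _ h)
  | lam _ ih => intro η' hη; exact .lam (ih (scons_mono subset_rfl hη))
  | app _ _ ih1 ih2 => intro η' hη; exact .app (ih1 hη) fun i => ih2 i hη
  | appS _ _ ih1 ih2 => intro η' hη; exact .appS (ih1 hη) (ih2 hη)
  | k0 => intro η' hη; exact .k0
  | k1 _ ih => intro η' hη; exact .k1 fun i => ih i hη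
  | k2 _ _ ih1 ih2 => intro η' hη; exact .k2 (fun i => ih1 i hη) fun i => ih2 i hη
  | rule hm h _ => intro η' hη; exact .rule hm h
  | stuck hm => intro η' hη; exact .stuck hm

theorem fin_join {n : ℕ} {M : DB} {η : ℕ → Set Ty} {S : Fin n → Ty}
    (ih : ∀ i, ∃ η' : ℕ → Set Ty, (∀ x, η' x ⊆ η x) ∧ (∀ x, (η' x).Finite) ∧ Typ η' M (S i)) :
    ∃ η' : ℕ → Set Ty, (∀ x, η' x ⊆ η x) ∧ (∀ x, (η' x).Finite) ∧ ∀ i, Typ η' M (S i) := by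
  choose f h1 h2 h3 using ih
  refine ⟨fun x => ⋃ i, f i x, fun x => Set.iUnion_subset fun i => h1 i x,
    fun x => Set.finite_iUnion fun i => h2 i x, fun i => (h3 i).mono fun x => ?_⟩
  exact Set.subset_iUnion (fun i => f i x) i

theorem Typ.cont {η M σ} (h : Typ η M σ) :
    ∃ η' : ℕ → Set Ty, (∀ x, η' x ⊆ η x) ∧ (∀ x, (η' x).Finite) ∧ Typ η' M σ := by
  induction h with
  | @var η x σ h =>
    refine ⟨fun y => if y = x then {σ} else ∅, fun y => ?_, fun y => ?_, .var (by simp)⟩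
    · dsimp only; split_ifs with e
      · subst e; simpa using h
      · simp
    · dsimp only; split_ifs <;> simp
  | @lam η M n S σ _ ih =>
    obtain ⟨η', h1, h2, h3⟩ := ih
    refine ⟨fun x => η' (x + 1), fun x => h1 (x + 1), fun x => h2 _, .lam (h3.mono ?_)⟩
    rintro (_ | x)
    · exact h1 0
    · exact subset_rfl
  | app _ _ ih1 ih2 =>
    obtain ⟨f, a1, a2, a3⟩ := ih1
    obtain ⟨g, b1, b2, b3⟩ := fin_join ih2
    exact ⟨fun x => f x ∪ g x, fun x => Set.union_subset (a1 x) (b1 x),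
      fun x => (a2 x).union (b2 x), .app (a3.mono fun x => Set.subset_union_left)
        fun i => (b3 i).mono fun x => Set.subset_union_right⟩
  | appS _ _ ih1 ih2 =>
    obtain ⟨f, a1, a2, a3⟩ := ih1
    obtain ⟨g, b1, b2, b3⟩ := ih2
    exact ⟨fun x => f x ∪ g x, fun x => Set.union_subset (a1 x) (b1 x),
      fun x => (a2 x).union (b2 x), .appS (a3.mono fun x => Set.subset_union_left)
        (b3.mono fun x => Set.subset_union_right)⟩
  | k0 => exact ⟨fun _ => ∅, fun _ => by simp, fun _ => by simp, .k0⟩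
  | k1 _ ih =>
    obtain ⟨g, b1, b2, b3⟩ := fin_join ih
    exact ⟨g, b1, b2, .k1 b3⟩
  | k2 _ _ ih1 ih2 =>
    obtain ⟨f, a1, a2, a3⟩ := fin_join ih1
    obtain ⟨g, b1, b2, b3⟩ := fin_join ih2
    exact ⟨fun x => f x ∪ g x, fun x => Set.union_subset (a1 x) (b1 x),
      fun x => (a2 x).union (b2 x), .k2 (fun i => (a3 i).mono fun x => Set.subset_union_left)
        fun i => (b3 i).mono fun x => Set.subset_union_right⟩
  | rule hm h _ => exact ⟨fun _ => ∅, fun _ => by simp, fun _ => by simp, .rule hm h⟩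
  | stuck hm => exact ⟨fun _ => ∅, fun _ => by simp, fun _ => by simp, .stuck hm⟩

theorem mkI {s : Set Ty} (hf : s.Finite) (hn : s.Nonempty) : ∃ S : I, rg S = s := by
  obtain ⟨n, f, hf'⟩ := hf.fin_param
  rcases n with _ | n
  · obtain ⟨x, hx⟩ := hn
    rw [← hf'.2] at hx
    obtain ⟨i, _⟩ := hx
    exact i.elim0
  · exact ⟨⟨n, f⟩, hf'.2⟩

theorem rg_nonempty (S : I) : (rg S).Nonempty := ⟨S.2 0, 0, rfl⟩
theorem rg_finite (S : I) : (rg S).Finite := Set.finite_range _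

def dp (d a : Set Ty) : Set Ty :=
  {σ | (∃ S : I, rg S ⊆ a ∧ Ty.arr S.1 S.2 σ ∈ d) ∨ (σ = .star ∧ Ty.star ∈ d ∧ a.Nonempty)}

theorem dp_mono {d d' a a' : Set Ty} (h : d ⊆ d') (h' : a ⊆ a') : dp d a ⊆ dp d' a' := by
  rintro σ (⟨S, h1, h2⟩ | ⟨h1, h2, h3⟩)
  · exact .inl ⟨S, h1.trans h', h h2⟩
  · exact .inr ⟨h1, h h2, h3.mono h'⟩

def sm (η : ℕ → Set Ty) (M : DB) : Set Ty := {σ | Typ η M σ}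

theorem sm_var (η : ℕ → Set Ty) (x : ℕ) : sm η (.var x) = η x := by
  ext σ; constructor
  · intro h; cases h; assumption
  · exact fun h => .var h

theorem sm_app (η : ℕ → Set Ty) (M N : DB) : sm η (.app M N) = dp (sm η M) (sm η N) := by
  ext σ; constructor
  · intro h
    cases h with
    | @app _ _ _ n S _ h1 h2 =>
      exact .inl ⟨⟨n, S⟩, by rintro _ ⟨i, rfl⟩; exact h2 i, h1⟩
    | appS h1 h2 => exact .inr ⟨rfl, h1, _, h2⟩
  · rintro (⟨S, h1, h2⟩ | ⟨rfl, h2, τ, h3⟩)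
    · exact .app h2 fun i => h1 ⟨i, rfl⟩
    · exact .appS h2 h3

theorem sm_cst (η η' : ℕ → Set Ty) (c : MC) : sm η (.cst c) = sm η' (.cst c) := by
  ext σ; constructor
  all_goals
    intro h
    cases h with
    | rule hm h => exact .rule hm h
    | stuck hm => exact .stuck hm

theorem sm_lam {η : ℕ → Set Ty} {a : Set Ty} (ha : a.Nonempty) (M : DB) :
    sm (scons a η) M ⊆ dp (sm η (.lam M)) a := by
  intro σ h
  obtain ⟨η', h1, h2, h3⟩ := Typ.cont h
  obtain ⟨x, hx⟩ := ha
  obtain ⟨S, hS⟩ := mkI ((h2 0).union (Set.finite_singleton x)) ⟨x, by simp⟩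
  refine .inl ⟨S, ?_, .lam (h3.mono ?_)⟩
  · rw [hS]
    exact Set.union_subset (h1 0) (by simpa using hx)
  · rintro (_ | y)
    · change _ ⊆ rg S
      rw [hS]; exact Set.subset_union_left
    · exact h1 (y + 1)

/-- Application of a constant to a (reversed) list of semantic arguments. -/
def V (c : MC) : List (Set Ty) → Set Ty
  | [] => sm (fun _ => ∅) (.cst c)
  | a :: l => dp (V c l) a

theorem V_mono {c : MC} {l l' : List (Set Ty)} (h : List.Forall₂ (· ⊆ ·) l l') : V c l ⊆ V c l' := by
  induction h with
  | nil => exact subset_rfl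
  | cons h _ ih => exact dp_mono ih h

theorem V_arrs {c : MC} {l : List I} {l' : List (Set Ty)}
    (h : List.Forall₂ (fun S A => rg S ⊆ A) l l') : ∀ {σ}, arrs l σ ∈ V c [] → σ ∈ V c l' := by
  induction h with
  | nil => exact fun h => h
  | cons h _ ih => exact fun h' => .inl ⟨_, h, ih h'⟩

def KS (a : FCO) (A : Set Ty) : Prop := Ty.k0 a ∈ A
def SuS (e A : Set Ty) : Prop := e.Nonempty ∧ ∃ E : I, Ty.succ E.1 E.2 ∈ A ∧ e ⊆ rg E
def CoS (a e A : Set Ty) : Prop := a.Nonempty ∧ e.Nonempty ∧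
  ∀ E F : I, rg E ⊆ a → rg F ⊆ e → Ty.cons E.1 E.2 F.1 F.2 ∈ A
def StS (A : Set Ty) : Prop := Ty.star ∈ A

def one (σ : Ty) : I := ⟨0, fun _ => σ⟩
theorem rg_one (σ : Ty) : rg (one σ) = {σ} := by simp [rg, one]

theorem exI {a : Set Ty} (h : a.Nonempty) : ∃ S : I, rg S ⊆ a := by
  obtain ⟨x, hx⟩ := h
  exact ⟨one x, by simpa [rg_one] using hx⟩

theorem env_approx : ∀ {Es : List (Set Ty)}, (∀ E ∈ Es, E.Nonempty) → ∀ {η : ℕ → Set Ty},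
    (∀ x, (η x).Finite) → (∀ x, η x ⊆ envT Es x) →
    ∃ Es' : List I, List.Forall₂ (fun S A => rg S ⊆ A) Es' Es ∧ ∀ x, η x ⊆ envT (Es'.map rg) x
  | [], _, η, _, h => ⟨[], .nil, fun x => by simpa using h x⟩
  | E :: Es, hn, η, hf, h => by
    obtain ⟨Es', h1, h2⟩ := env_approx (Es := Es) (fun E hE => hn E (by simp [hE]))
      (η := fun x => η (x + 1)) (fun x => hf _) (fun x => by simpa [envT] using h (x + 1))
    obtain ⟨y, hy⟩ := hn E (by simp)
    obtain ⟨S, hS⟩ := mkI ((hf 0).union (Set.finite_singleton y)) ⟨y, by simp⟩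
    refine ⟨S :: Es', .cons ?_ h1, ?_⟩
    · have := h 0
      simp only [envT, List.getD_cons_zero] at this
      rw [hS]
      exact Set.union_subset this (by simpa using hy)
    · rintro (_ | x)
      · simp [envT, hS]
      · simpa [envT] using h2 x

theorem sem_rule {c As rhs Es} (h : Mt KS SuS CoS c As rhs Es) (hn : ∀ E ∈ Es, E.Nonempty) :
    sm (envT Es) rhs ⊆ V c As := by
  intro σ hσ
  obtain ⟨η', h1, h2, h3⟩ := Typ.cont hσ
  obtain ⟨Es', h4, h5⟩ := env_approx hn h2 h1
  obtain ⟨l', h6, h7⟩ := Mt.sim (K' := KI) (Su' := SuI) (Co' := CoI)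
    (fun (S : I) A => rg S ⊆ A)
    (fun a x hx => ⟨one (.k0 a), by simpa [rg_one, KS] using hx, by simp [KI, rg_one]⟩)
    (fun e x e' ⟨_, E, hE, he⟩ h' => ⟨one (.succ E.1 E.2), by simpa [rg_one] using hE,
      E, by simp [rg_one], h'.trans he⟩)
    (fun e d x e' d' hc he hd => ⟨one (.cons e'.1 e'.2 d'.1 d'.2),
      by simpa [rg_one] using hc.2.2 _ _ he hd, by simp [CoI, rg_one]⟩) h h4
  exact V_arrs h6 (.rule h7 (h3.mono h5))

theorem sem_stuck {c As} (h : Ms StS KS SuS CoS c As) (hn : ∀ A ∈ As, A.Nonempty) :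
    Ty.star ∈ V c As := by
  suffices ∃ l' : List I, List.Forall₂ (fun S A => rg S ⊆ A) l' As ∧ Ms StI KI SuI CoI c l' by
    obtain ⟨l', h1, h2⟩ := this
    exact V_arrs h1 (.stuck h2)
  have hst : ∀ {A}, StS A → ∃ S, rg S ⊆ A ∧ StI S := fun h =>
    ⟨one .star, by simpa [rg_one, StS] using h, by simp [StI, rg_one]⟩
  have hk : ∀ {a A}, KS a A → ∃ S, rg S ⊆ A ∧ KI a S := fun h =>
    ⟨one (.k0 _), by simpa [rg_one, KS] using h, by simp [KI, rg_one]⟩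
  have hs : ∀ {e A}, SuS e A → ∃ E S, rg S ⊆ A ∧ SuI E S := by
    rintro e A ⟨_, E, h, _⟩
    exact ⟨E, one (.succ E.1 E.2), by simpa [rg_one] using h, E, by simp [rg_one], subset_rfl⟩
  have hc : ∀ {a e A}, CoS a e A → ∃ E F S, rg S ⊆ A ∧ CoI E F S := by
    rintro a e A ⟨h1, h2, h3⟩
    obtain ⟨E, hE⟩ := exI h1
    obtain ⟨F, hF⟩ := exI h2
    exact ⟨E, F, one (.cons E.1 E.2 F.1 F.2), by simpa [rg_one] using h3 E F hE hF,
      by simp [CoI, rg_one]⟩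
  cases h <;> simp only [List.forall_mem_cons, List.not_mem_nil, false_imp_iff, implies_true,
    and_true] at hn
  case ifs b x y h =>
    obtain ⟨b', h1, h2⟩ := hst h
    obtain ⟨y', hy⟩ := exI hn.1
    obtain ⟨x', hx⟩ := exI hn.2.1
    exact ⟨[y', x', b'], by simp [*], .ifs h2⟩
  case lt2 m n h =>
    obtain ⟨b', h1, h2⟩ := hst h
    obtain ⟨y', hy⟩ := exI hn.2
    exact ⟨[b', y'], by simp [*], .lt2 h2⟩
  case lt1 m m' n h h' =>
    obtain ⟨b', h1, h2⟩ := hst h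
    obtain ⟨E, S, h3, h4⟩ := hs h'
    exact ⟨[S, b'], by simp [*], .lt1 h2 h4⟩
  case lh s h =>
    obtain ⟨b', h1, h2⟩ := hst h
    exact ⟨[b'], by simp [*], .lh h2⟩
  case get1 s n h =>
    obtain ⟨b', h1, h2⟩ := hst h
    obtain ⟨y', hy⟩ := exI hn.1
    exact ⟨[y', b'], by simp [*], .get1 h2⟩
  case getN s n h =>
    obtain ⟨b', h1, h2⟩ := hk h
    obtain ⟨y', hy⟩ := exI hn.1
    exact ⟨[y', b'], by simp [*], .getN h2⟩
  case get2 x s' s n h h' =>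
    obtain ⟨b', h1, h2⟩ := hst h'
    obtain ⟨E, F, S, h3, h4⟩ := hc h
    exact ⟨[b', S], by simp [*], .get2 h4 h2⟩
  case cat s t h =>
    obtain ⟨b', h1, h2⟩ := hst h
    obtain ⟨y', hy⟩ := exI hn.1
    exact ⟨[y', b'], by simp [*], .cat h2⟩
  case recs x f n h =>
    obtain ⟨b', h1, h2⟩ := hst h
    obtain ⟨y', hy⟩ := exI hn.2.1
    obtain ⟨x', hx⟩ := exI hn.2.2
    exact ⟨[b', y', x'], by simp [*], .recs h2⟩
  case psi y g s k b h =>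
    obtain ⟨b', h1, h2⟩ := hst h
    obtain ⟨k', hk⟩ := exI hn.2.1
    obtain ⟨s', hs⟩ := exI hn.2.2.1
    obtain ⟨g', hg⟩ := exI hn.2.2.2.1
    obtain ⟨y', hy⟩ := exI hn.2.2.2.2
    exact ⟨[b', k', s', g', y'], by simp [*], .psi h2⟩

end Pf
end SNPaper
namespace SNPaper
namespace Pf

/-! ### The rules, semantically -/

theorem sm_cst' (η : ℕ → Set Ty) (c : MC) : sm η (.cst c) = V c [] := sm_cst _ _ _

def su (e : Set Ty) : Set Ty := {σ | ∃ E : I, rg E ⊆ e ∧ σ = .succ E.1 E.2}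
def co (a e : Set Ty) : Set Ty :=
  {σ | ∃ E F : I, rg E ⊆ a ∧ rg F ⊆ e ∧ σ = .cons E.1 E.2 F.1 F.2}

theorem sm_k0 (η : ℕ → Set Ty) (a : FCO) : sm η (.k0 a) = {.k0 a} := by
  ext σ; constructor
  · intro h; cases h; rfl
  · rintro rfl; exact .k0

theorem sm_k1 (η : ℕ → Set Ty) (M : DB) : sm η (.k1 M) = su (sm η M) := by
  ext σ; constructor
  · intro h
    cases h with
    | @k1 _ _ n S h => exact ⟨⟨n, S⟩, by rintro _ ⟨i, rfl⟩; exact h i, rfl⟩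
  · rintro ⟨E, h, rfl⟩; exact .k1 fun i => h ⟨i, rfl⟩

theorem sm_k2 (η : ℕ → Set Ty) (M N : DB) : sm η (.k2 M N) = co (sm η M) (sm η N) := by
  ext σ; constructor
  · intro h
    cases h with
    | @k2 _ _ _ n S m T h h' =>
      exact ⟨⟨n, S⟩, ⟨m, T⟩, by rintro _ ⟨i, rfl⟩; exact h i, by rintro _ ⟨i, rfl⟩; exact h' i, rfl⟩
  · rintro ⟨E, F, h, h', rfl⟩; exact .k2 (fun i => h ⟨i, rfl⟩) fun i => h' ⟨i, rfl⟩

theorem co_CoS {a e : Set Ty} (ha : a.Nonempty) (he : e.Nonempty) : CoS a e (co a e) :=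
  ⟨ha, he, fun E F h h' => ⟨E, F, h, h', rfl⟩⟩

theorem CoS.mono {a e A B : Set Ty} (h : CoS a e A) (h' : A ⊆ B) : CoS a e B :=
  ⟨h.1, h.2.1, fun E F h1 h2 => h' (h.2.2 E F h1 h2)⟩

theorem CoS.ne {a e A : Set Ty} (h : CoS a e A) : A.Nonempty := by
  obtain ⟨E, hE⟩ := exI h.1
  obtain ⟨F, hF⟩ := exI h.2.1
  exact ⟨_, h.2.2 E F hE hF⟩

theorem SuS.ne {e A : Set Ty} (h : SuS e A) : A.Nonempty := by
  obtain ⟨_, E, hE, _⟩ := h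
  exact ⟨_, hE⟩

theorem V_cons (c : MC) (a : Set Ty) (l : List (Set Ty)) : dp (V c l) a = V c (a :: l) := rfl

theorem r_ifT {b x y : Set Ty} (h : Ty.k0 .tt ∈ b) (hx : x.Nonempty) (hy : y.Nonempty) :
    x ⊆ V .cif [y, x, b] := by
  have := sem_rule (Mt.ifT (x := x) (y := y) (show KS _ _ from h)) (by simp [*])
  simpa [sm_var, envT] using this

theorem r_ifF {b x y : Set Ty} (h : Ty.k0 .ff ∈ b) (hx : x.Nonempty) (hy : y.Nonempty) :
    y ⊆ V .cif [y, x, b] := by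
  have := sem_rule (Mt.ifF (x := x) (y := y) (show KS _ _ from h)) (by simp [*])
  simpa [sm_var, envT] using this

theorem r_lt0 {m n : Set Ty} (h : Ty.k0 .zero ∈ m) (hn : n.Nonempty) :
    Ty.k0 .ff ∈ V .clt [m, n] := by
  have := sem_rule (Mt.lt0 (n := n) (show KS _ _ from h)) (by simp [*])
  simpa [sm_k0] using this

theorem r_ltS {m n m' : Set Ty} (h : Ty.k0 .zero ∈ n) (hm : SuS m' m) :
    Ty.k0 .tt ∈ V .clt [m, n] := by
  have := sem_rule (Mt.ltS (show KS _ _ from h) hm) (by simp [hm.1])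
  simpa [sm_k0] using this

theorem r_ltSS {m n m' n' : Set Ty} (hn : SuS n' n) (hm : SuS m' m) :
    V .clt [m', n'] ⊆ V .clt [m, n] := by
  have := sem_rule (Mt.ltSS hn hm) (by simp [hm.1, hn.1])
  simpa [sm_app, sm_var, sm_cst', V_cons, envT] using this

theorem r_lh0 {s : Set Ty} (h : Ty.k0 .nil ∈ s) : Ty.k0 .zero ∈ V .clh [s] := by
  have := sem_rule (Mt.lh0 (show KS _ _ from h)) (by simp)
  simpa [sm_k0] using this

theorem r_lhS {x s' s : Set Ty} (h : CoS x s' s) : su (V .clh [s']) ⊆ V .clh [s] := by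
  have := sem_rule (Mt.lhS h) (by simp [h.1, h.2.1])
  simpa [sm_k1, sm_app, sm_var, sm_cst', V_cons, envT] using this

theorem r_get0 {x s' s n : Set Ty} (h : CoS x s' s) (hn : Ty.k0 .zero ∈ n) :
    x ⊆ V .cget [n, s] := by
  have := sem_rule (Mt.get0 h (show KS _ _ from hn)) (by simp [h.1, h.2.1])
  simpa [sm_k1, sm_app, sm_var, sm_cst', V_cons, envT] using this

theorem r_getS {x s' s n n' : Set Ty} (h : CoS x s' s) (hn : SuS n' n) :
    V .cget [n', s'] ⊆ V .cget [n, s] := by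
  have := sem_rule (Mt.getS h hn) (by simp [h.1, h.2.1, hn.1])
  simpa [sm_k1, sm_app, sm_var, sm_cst', V_cons, envT] using this

theorem r_cat0 {s t : Set Ty} (h : Ty.k0 .nil ∈ s) (ht : t.Nonempty) : t ⊆ V .cat [t, s] := by
  have := sem_rule (Mt.cat0 (t := t) (show KS _ _ from h)) (by simp [ht])
  simpa [sm_k1, sm_app, sm_var, sm_cst', V_cons, envT] using this

theorem r_catS {x s' s t : Set Ty} (h : CoS x s' s) (ht : t.Nonempty) :
    co x (V .cat [t, s']) ⊆ V .cat [t, s] := by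
  have := sem_rule (Mt.catS (t := t) h) (by simp [ht, h.1, h.2.1])
  simpa [sm_k2, sm_app, sm_var, sm_cst', V_cons, envT] using this

theorem r_rec0 {x f n : Set Ty} (h : Ty.k0 .zero ∈ n) (hx : x.Nonempty) (hf : f.Nonempty) :
    x ⊆ V .crec [n, f, x] := by
  have := sem_rule (Mt.rec0 (x := x) (f := f) (show KS _ _ from h)) (by simp [*])
  simpa [sm_k1, sm_app, sm_var, sm_cst', V_cons, envT] using this

theorem r_recS {x f n n' : Set Ty} (h : SuS n' n) (hx : x.Nonempty) (hf : f.Nonempty) :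
    dp (dp f n') (V .crec [n', f, x]) ⊆ V .crec [n, f, x] := by
  have := sem_rule (Mt.recS (x := x) (f := f) h) (by simp [hx, hf, h.1])
  simpa [sm_k1, sm_app, sm_var, sm_cst', V_cons, envT] using this

def H (y g s : Set Ty) : Set Ty := sm (envT [y, g, s])
  (.lam (.app (.app (.app (.app (.app (.cst .cpsi) (.var 1)) (.var 2)) (.var 3))
    (.var 0)) (.app (.app (.cst .clt) (.var 0)) (.app (.cst .clh) (.var 3)))))

theorem r_phi {y g s : Set Ty} (hy : y.Nonempty) (hg : g.Nonempty) (hs : s.Nonempty) :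
    dp y (H y g s) ⊆ V .cphi [s, g, y] := by
  have := sem_rule (Mt.phi (K := KS) (Su := SuS) (Co := CoS) (y := y) (g := g) (s := s))
    (by simp [*])
  rw [rhsPhi, sm_app, sm_var] at this
  exact this

theorem H_app {y g s n : Set Ty} (hn : n.Nonempty) :
    V .cpsi [V .clt [V .clh [s], n], n, s, g, y] ⊆ dp (H y g s) n := by
  have := sm_lam (η := envT [y, g, s]) hn
    (.app (.app (.app (.app (.app (.cst .cpsi) (.var 1)) (.var 2)) (.var 3))
    (.var 0)) (.app (.app (.cst .clt) (.var 0)) (.app (.cst .clh) (.var 3))))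
  simpa [sm_app, sm_var, sm_cst', V_cons, envT, scons, H] using this

theorem H_arr {y g s : Set Ty} {S : I} {σ : Ty}
    (h : σ ∈ V .cpsi [V .clt [V .clh [s], rg S], rg S, s, g, y]) :
    Ty.arr S.1 S.2 σ ∈ H y g s := by
  refine Typ.lam ?_
  change σ ∈ sm (scons (rg S) (envT [y, g, s])) _
  simpa [sm_app, sm_var, sm_cst', V_cons, envT, scons] using h

theorem r_psiT {y g s k b : Set Ty} (h : Ty.k0 .tt ∈ b) (hy : y.Nonempty) (hg : g.Nonempty)
    (hs : s.Nonempty) (hk : k.Nonempty) : V .cget [k, s] ⊆ V .cpsi [b, k, s, g, y] := by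
  have := sem_rule (Mt.psiT (Su := SuS) (Co := CoS) (y := y) (g := g) (s := s) (k := k)
    (show KS _ _ from h)) (by simp [*])
  simpa [sm_app, sm_var, sm_cst', V_cons, envT] using this

def G (y g s k : Set Ty) : Set Ty := sm (envT [y, g, s, k])
  (.lam (.app (.app (.app (.cst .cphi) (.var 1)) (.var 2))
    (.app (.app (.cst .cat) (.var 3)) (.k2 (.var 0) (.k0 .nil)))))

theorem r_psiF {y g s k b : Set Ty} (h : Ty.k0 .ff ∈ b) (hy : y.Nonempty) (hg : g.Nonempty)
    (hs : s.Nonempty) (hk : k.Nonempty) :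
    dp (dp g k) (G y g s k) ⊆ V .cpsi [b, k, s, g, y] := by
  have := sem_rule (Mt.psiF (Su := SuS) (Co := CoS) (y := y) (g := g) (s := s) (k := k)
    (show KS _ _ from h)) (by simp [*])
  rw [rhsPsi, sm_app, sm_app, sm_var, sm_var] at this
  exact this

theorem G_app {y g s k a : Set Ty} (ha : a.Nonempty) :
    V .cphi [V .cat [co a {.k0 .nil}, s], g, y] ⊆ dp (G y g s k) a := by
  have := sm_lam (η := envT [y, g, s, k]) ha
    (.app (.app (.app (.cst .cphi) (.var 1)) (.var 2))
    (.app (.app (.cst .cat) (.var 3)) (.k2 (.var 0) (.k0 .nil))))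
  simpa [sm_app, sm_var, sm_cst', sm_k2, sm_k0, V_cons, envT, scons, G] using this

/-! ### Numerals and lists -/

def NV (z : Ty) : ℕ → Ty → Prop
  | 0, σ => σ = z
  | i + 1, σ => ∃ S : I, σ = .succ S.1 S.2 ∧ ∃ j, NV z i (S.2 j)

def hasN (z : Ty) (i : ℕ) (d : Set Ty) : Prop := ∃ σ ∈ d, NV z i σ

theorem hasN.mono {z i d d'} (h : hasN z i d) (h' : d ⊆ d') : hasN z i d' := by
  obtain ⟨σ, h1, h2⟩ := h
  exact ⟨σ, h' h1, h2⟩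

theorem hasN.ne {z i d} (h : hasN z i d) : d.Nonempty := by
  obtain ⟨σ, h1, h2⟩ := h
  exact ⟨σ, h1⟩

theorem hasN_zero {z d} : hasN z 0 d ↔ z ∈ d := by simp [hasN, NV]

theorem hasN.pred {z i d} (h : hasN z (i + 1) d) : ∃ e, SuS e d ∧ hasN z i e := by
  obtain ⟨σ, h1, S, rfl, j, hj⟩ := h
  exact ⟨{S.2 j}, ⟨by simp, S, h1, by simp [rg]⟩, S.2 j, rfl, hj⟩

theorem hasN_su {z i e} (h : hasN z i e) : hasN z (i + 1) (su e) := by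
  obtain ⟨σ, h1, h2⟩ := h
  exact ⟨_, ⟨one σ, by simpa [rg_one] using h1, rfl⟩, one σ, rfl, (0 : Fin 1), h2⟩

theorem lt_tt {z : Ty} : ∀ {i j : ℕ} {n m : Set Ty}, hasN (.k0 .zero) i n → hasN z j m → i < j →
    Ty.k0 .tt ∈ V .clt [m, n]
  | 0, j + 1, n, m, hn, hm, _ => by
    obtain ⟨e, he, _⟩ := hm.pred
    exact r_ltS (hasN_zero.1 hn) he
  | i + 1, j + 1, n, m, hn, hm, h => by
    obtain ⟨e, he, he'⟩ := hm.pred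
    obtain ⟨f, hf, hf'⟩ := hn.pred
    exact r_ltSS hf he (lt_tt hf' he' (by omega))

theorem lt_st {z : Ty} : ∀ {i j : ℕ} {n m : Set Ty}, hasN .star i n → hasN z j m → i < j →
    Ty.star ∈ V .clt [m, n]
  | 0, j + 1, n, m, hn, hm, _ => by
    obtain ⟨e, he, _⟩ := hm.pred
    exact sem_stuck (.lt1 (hasN_zero.1 hn) he) (by simp [hn.ne, hm.ne])
  | i + 1, j + 1, n, m, hn, hm, h => by
    obtain ⟨e, he, he'⟩ := hm.pred
    obtain ⟨f, hf, hf'⟩ := hn.pred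
    exact r_ltSS hf he (lt_st hf' he' (by omega))

theorem lt_ff {z : Ty} : ∀ {i j : ℕ} {n m : Set Ty}, hasN z i n → hasN (.k0 .zero) j m → j ≤ i →
    Ty.k0 .ff ∈ V .clt [m, n]
  | i, 0, n, m, hn, hm, _ => r_lt0 (hasN_zero.1 hm) hn.ne
  | i + 1, j + 1, n, m, hn, hm, h => by
    obtain ⟨e, he, he'⟩ := hm.pred
    obtain ⟨f, hf, hf'⟩ := hn.pred
    exact r_ltSS hf he (lt_ff hf' he' (by omega))

theorem lt_st2 {z : Ty} : ∀ {i j : ℕ} {n m : Set Ty}, hasN z i n → hasN .star j m → j ≤ i →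
    Ty.star ∈ V .clt [m, n]
  | i, 0, n, m, hn, hm, _ => sem_stuck (.lt2 (hasN_zero.1 hm)) (by simp [hn.ne, hm.ne])
  | i + 1, j + 1, n, m, hn, hm, h => by
    obtain ⟨e, he, he'⟩ := hm.pred
    obtain ⟨f, hf, hf'⟩ := hn.pred
    exact r_ltSS hf he (lt_st2 hf' he' (by omega))

def hasL (z : Ty) : List (Set Ty) → Set Ty → Prop
  | [], d => z ∈ d
  | a :: l, d => ∃ e, CoS a e d ∧ hasL z l e

theorem hasL.mono {z : Ty} : ∀ {l : List (Set Ty)} {d d' : Set Ty}, hasL z l d → d ⊆ d' → hasL z l d'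
  | [], _, _, h, h' => h' h
  | _ :: _, _, _, ⟨e, h1, h2⟩, h' => ⟨e, h1.mono h', h2⟩

theorem hasL.ne {z : Ty} : ∀ {l : List (Set Ty)} {d : Set Ty}, hasL z l d → d.Nonempty
  | [], _, h => ⟨z, h⟩
  | _ :: _, _, ⟨_, h1, _⟩ => h1.ne

theorem lh_nil : ∀ {l : List (Set Ty)} {s : Set Ty}, hasL (.k0 .nil) l s →
    hasN (.k0 .zero) l.length (V .clh [s])
  | [], _, h => hasN_zero.2 (r_lh0 h)
  | _ :: _, _, ⟨_, h1, h2⟩ => (hasN_su (lh_nil h2)).mono (r_lhS h1)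

theorem lh_st : ∀ {l : List (Set Ty)} {s : Set Ty}, hasL .star l s →
    hasN .star l.length (V .clh [s])
  | [], _, h => hasN_zero.2 (sem_stuck (.lh h) (by simp; exact ⟨_, h⟩))
  | _ :: _, _, ⟨_, h1, h2⟩ => (hasN_su (lh_st h2)).mono (r_lhS h1)

theorem get_in {z : Ty} : ∀ {i : ℕ} {l : List (Set Ty)} {s n a : Set Ty}, hasL z l s →
    hasN (.k0 .zero) i n → l[i]? = some a → a ⊆ V .cget [n, s]
  | 0, b :: l, s, n, a, ⟨e, h1, h2⟩, hn, h => by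
    simp at h; subst h
    exact r_get0 h1 (hasN_zero.1 hn)
  | i + 1, b :: l, s, n, a, ⟨e, h1, h2⟩, hn, h => by
    obtain ⟨f, hf, hf'⟩ := hn.pred
    exact (get_in h2 hf' (by simpa using h)).trans (r_getS h1 hf)

theorem get_st {z : Ty} : ∀ {i : ℕ} {l : List (Set Ty)} {s n : Set Ty}, hasL z l s →
    hasN .star i n → i < l.length → Ty.star ∈ V .cget [n, s]
  | 0, b :: l, s, n, ⟨e, h1, h2⟩, hn, h =>
    sem_stuck (.get2 h1 (hasN_zero.1 hn)) (by simp [hn.ne, h1.ne])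
  | i + 1, b :: l, s, n, ⟨e, h1, h2⟩, hn, h => by
    obtain ⟨f, hf, hf'⟩ := hn.pred
    exact r_getS h1 hf (get_st h2 hf' (by simpa using h))

theorem get_out {z z' : Ty} (hz : z = .k0 .nil ∨ z = .star) : ∀ {i : ℕ} {l : List (Set Ty)}
    {s n : Set Ty}, hasL z l s →
    hasN z' i n → l.length ≤ i → Ty.star ∈ V .cget [n, s]
  | i, [], s, n, h, hn, _ => by
    rcases hz with rfl | rfl
    · exact sem_stuck (.getN h) (by simp [hn.ne]; exact ⟨_, h⟩)
    · exact sem_stuck (.get1 h) (by simp [hn.ne]; exact ⟨_, h⟩)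
  | i + 1, b :: l, s, n, ⟨e, h1, h2⟩, hn, h => by
    obtain ⟨f, hf, hf'⟩ := hn.pred
    exact r_getS h1 hf (get_out hz h2 hf' (by simpa using h))

theorem cat_nil {z : Ty} : ∀ {l l' : List (Set Ty)} {s t : Set Ty}, hasL (.k0 .nil) l s →
    hasL z l' t → hasL z (l ++ l') (V .cat [t, s])
  | [], _, _, _, h, h' => h'.mono (r_cat0 h h'.ne)
  | _ :: _, _, _, _, ⟨_, h1, h2⟩, h' =>
    ⟨_, (co_CoS h1.1 (cat_nil h2 h').ne).mono (r_catS h1 h'.ne), cat_nil h2 h'⟩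

theorem cat_st : ∀ {l : List (Set Ty)} {s t : Set Ty}, hasL .star l s →
    t.Nonempty → hasL .star l (V .cat [t, s])
  | [], _, _, h, h' => sem_stuck (.cat h) (by simp [h']; exact ⟨_, h⟩)
  | _ :: _, _, _, ⟨_, h1, h2⟩, h' =>
    ⟨_, (co_CoS h1.1 (cat_st h2 h').ne).mono (r_catS h1 h'), cat_st h2 h'⟩

end Pf
end SNPaper
namespace SNPaper
namespace Pf

/-! ### Candidates and the semantics of types -/

structure CandP (A : Set (Set Ty)) : Prop where
  st : ∀ d, Ty.star ∈ d → d ∈ A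
  ne : ∀ d ∈ A, d.Nonempty
  up : ∀ d d', d ∈ A → d ⊆ d' → d' ∈ A

def BoolS : Set (Set Ty) := {d | Ty.k0 .tt ∈ d ∨ Ty.k0 .ff ∈ d ∨ Ty.star ∈ d}
def NatS : Set (Set Ty) := {d | ∃ i, hasN (.k0 .zero) i d ∨ hasN .star i d}
def ListS (A : Set (Set Ty)) : Set (Set Ty) :=
  {d | ∃ l : List (Set Ty), (∀ a ∈ l, a ∈ A) ∧ (hasL (.k0 .nil) l d ∨ hasL .star l d)}
def ArrS (A B : Set (Set Ty)) : Set (Set Ty) := {d | ∀ a ∈ A, dp d a ∈ B}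

theorem BoolS_cand : CandP BoolS where
  st d h := .inr (.inr h)
  ne := by
    rintro d (h | h | h) <;> exact ⟨_, h⟩
  up := by
    rintro d d' (h | h | h) h'
    · exact .inl (h' h)
    · exact .inr (.inl (h' h))
    · exact .inr (.inr (h' h))

theorem NatS_cand : CandP NatS where
  st d h := ⟨0, .inr (hasN_zero.2 h)⟩
  ne := by
    rintro d ⟨i, h | h⟩ <;> exact h.ne
  up := by
    rintro d d' ⟨i, h | h⟩ h'
    · exact ⟨i, .inl (h.mono h')⟩
    · exact ⟨i, .inr (h.mono h')⟩

theorem ListS_cand (A : Set (Set Ty)) : CandP (ListS A) where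
  st d h := ⟨[], by simp, .inr h⟩
  ne := by
    rintro d ⟨i, _, h | h⟩ <;> exact h.ne
  up := by
    rintro d d' ⟨i, h0, h | h⟩ h'
    · exact ⟨i, h0, .inl (h.mono h')⟩
    · exact ⟨i, h0, .inr (h.mono h')⟩

theorem ArrS_cand {A B : Set (Set Ty)} (hA : CandP A) (hB : CandP B) : CandP (ArrS A B) where
  st d h := fun a ha => hB.st _ (.inr ⟨rfl, h, hA.ne a ha⟩)
  ne := by
    intro d hd
    obtain ⟨σ, hσ⟩ := hB.ne _ (hd {.star} (hA.st _ rfl))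
    rcases hσ with ⟨S, _, h⟩ | ⟨_, h, _⟩
    · exact ⟨_, h⟩
    · exact ⟨_, h⟩
  up := fun d d' hd h a ha => hB.up _ _ (hd a ha) (dp_mono h subset_rfl)

def ts : FTy → (ℕ → Set (Set Ty)) → Set (Set Ty)
  | .tvar p, τ => τ p
  | .boole, _ => BoolS
  | .nat, _ => NatS
  | .list ρ, τ => ListS (ts ρ τ)
  | .arr ρ σ, τ => ArrS (ts ρ τ) (ts σ τ)
  | .all p ρ, τ => {d | ∀ A, CandP A → d ∈ ts ρ (Function.update τ p A)}

theorem cand_update {τ : ℕ → Set (Set Ty)} (h : ∀ p, CandP (τ p)) {p : ℕ} {A} (hA : CandP A) :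
    ∀ q, CandP (Function.update τ p A q) := by
  intro q
  rcases eq_or_ne q p with rfl | hq
  · simpa using hA
  · simpa [hq] using h q

theorem ts_cand (ρ : FTy) : ∀ {τ : ℕ → Set (Set Ty)}, (∀ p, CandP (τ p)) → CandP (ts ρ τ) := by
  induction ρ with
  | tvar p => intro τ h; exact h p
  | boole => intro τ h; exact BoolS_cand
  | nat => intro τ h; exact NatS_cand
  | list ρ ih => intro τ h; exact ListS_cand _
  | arr ρ σ ih1 ih2 => intro τ h; exact ArrS_cand (ih1 h) (ih2 h)
  | all p ρ ih =>
    intro τ h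
    exact ⟨fun d hd A hA => (ih (cand_update h hA)).st d hd,
      fun d hd => (ih (cand_update h BoolS_cand)).ne d (hd _ BoolS_cand),
      fun d d' hd h' A hA => (ih (cand_update h hA)).up d d' (hd A hA) h'⟩

theorem ts_congr (ρ : FTy) : ∀ {τ τ' : ℕ → Set (Set Ty)}, (∀ p ∈ ftv ρ, τ p = τ' p) →
    ts ρ τ = ts ρ τ' := by
  induction ρ with
  | tvar p => intro τ τ' h; exact h p (by simp [ftv])
  | boole => intro τ τ' h; rfl
  | nat => intro τ τ' h; rfl
  | list ρ ih => intro τ τ' h; simp only [ts]; rw [ih h]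
  | arr ρ σ ih1 ih2 =>
    intro τ τ' h
    simp only [ts]
    rw [ih1 fun p hp => h p (by simp [ftv, hp]), ih2 fun p hp => h p (by simp [ftv, hp])]
  | all p ρ ih =>
    intro τ τ' h
    simp only [ts]
    have : ∀ A, ts ρ (Function.update τ p A) = ts ρ (Function.update τ' p A) := by
      intro A
      apply ih
      intro q hq
      rcases eq_or_ne q p with rfl | hqp
      · simp
      · simp [hqp, h q (by simp [ftv, hq, hqp])]
    simp only [this]

theorem ts_subst (ρ : FTy) : ∀ (σ : ℕ → FTy) (τ : ℕ → Set (Set Ty)),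
    ts (tsubst ρ σ) τ = ts ρ fun q => ts (σ q) τ := by
  induction ρ with
  | tvar p => intro σ τ; rfl
  | boole => intro σ τ; rfl
  | nat => intro σ τ; rfl
  | list ρ ih => intro σ τ; simp only [tsubst, ts, ih]
  | arr ρ σ ih1 ih2 => intro σ τ; simp only [tsubst, ts, ih1, ih2]
  | all p ρ ih =>
    intro σ τ
    simp only [tsubst, ts]
    set z := freshVar ((ftv ρ \ {p}).biUnion fun q => ftv (σ q)) with hz
    have hfr := freshVar_not_mem ((ftv ρ \ {p}).biUnion fun q => ftv (σ q))
    rw [← hz] at hfr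
    have : ∀ A, ts (tsubst ρ (Function.update σ p (.tvar z))) (Function.update τ z A) =
        ts ρ (Function.update (fun q => ts (σ q) τ) p A) := by
      intro A
      rw [ih]
      apply ts_congr
      intro q hq
      rcases eq_or_ne q p with rfl | hqp
      · simp [ts]
      · simp only [Function.update_of_ne hqp]
        apply ts_congr
        intro r hr
        have : r ≠ z := by
          rintro rfl
          apply hfr
          simp only [Finset.mem_biUnion, Finset.mem_sdiff, Finset.mem_singleton]
          exact ⟨q, ⟨hq, hqp⟩, hr⟩
        simp [this]
    simp only [this]

/-! ### The constants -/

theorem hasN.ind {P : Set Ty → Prop} {z : Ty} (h0 : ∀ n, z ∈ n → P n)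
    (hS : ∀ e n, SuS e n → e ∈ NatS → P e → P n) (hz : z = .k0 .zero ∨ z = .star) :
    ∀ {i : ℕ} {n : Set Ty}, hasN z i n → P n
  | 0, n, h => h0 n (hasN_zero.1 h)
  | i + 1, n, h => by
    obtain ⟨e, h1, h2⟩ := h.pred
    refine hS e n h1 ⟨i, ?_⟩ (hasN.ind h0 hS hz h2)
    rcases hz with rfl | rfl
    · exact .inl h2
    · exact .inr h2

section consts
variable {A : Set (Set Ty)}

theorem t_if (hA : CandP A) : V .cif [] ∈ ArrS BoolS (ArrS A (ArrS A A)) := by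
  intro b hb x hx y hy
  have hx' := hA.ne x hx
  have hy' := hA.ne y hy
  have hb' := BoolS_cand.ne b hb
  rcases hb with hb | hb | hb
  · exact hA.up _ _ hx (r_ifT hb hx' hy')
  · exact hA.up _ _ hy (r_ifF hb hx' hy')
  · exact hA.st _ (sem_stuck (.ifs hb) (by simp [*]))

theorem t_lt' {m n : Set Ty} (hn : n ∈ NatS) (hm : m ∈ NatS) : V .clt [m, n] ∈ BoolS := by
  obtain ⟨i, hn⟩ := hn
  obtain ⟨j, hm⟩ := hm
  rcases lt_or_ge i j with h | h
  · rcases hn with hn | hn <;> rcases hm with hm | hm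
    · exact .inl (lt_tt hn hm h)
    · exact .inl (lt_tt hn hm h)
    · exact .inr (.inr (lt_st hn hm h))
    · exact .inr (.inr (lt_st hn hm h))
  · rcases hn with hn | hn <;> rcases hm with hm | hm
    · exact .inr (.inl (lt_ff hn hm h))
    · exact .inr (.inr (lt_st2 hn hm h))
    · exact .inr (.inl (lt_ff hn hm h))
    · exact .inr (.inr (lt_st2 hn hm h))

theorem t_lt : V .clt [] ∈ ArrS NatS (ArrS NatS BoolS) := fun _ hn _ hm => t_lt' hn hm

theorem t_lh' {s : Set Ty} (hs : s ∈ ListS A) : V .clh [s] ∈ NatS := by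
  obtain ⟨l, _, h | h⟩ := hs
  · exact ⟨_, .inl (lh_nil h)⟩
  · exact ⟨_, .inr (lh_st h)⟩

theorem t_get' (hA : CandP A) {s n : Set Ty} (hs : s ∈ ListS A) (hn : n ∈ NatS) : V .cget [n, s] ∈ A := by
  obtain ⟨l, hl, h⟩ := hs
  obtain ⟨i, hn⟩ := hn
  have key : ∀ z, (z = .k0 .nil ∨ z = .star) → hasL z l s → V .cget [n, s] ∈ A := by
    intro z hz h
    rcases lt_or_ge i l.length with hi | hi
    · rcases hn with hn | hn
      · exact hA.up _ _ (hl _ (List.getElem_mem hi)) (get_in h hn (List.getElem?_eq_getElem hi))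
      · exact hA.st _ (get_st h hn hi)
    · rcases hn with hn | hn
      · exact hA.st _ (get_out hz h hn hi)
      · exact hA.st _ (get_out hz h hn hi)
  rcases h with h | h
  · exact key _ (.inl rfl) h
  · exact key _ (.inr rfl) h

theorem t_cat' {s t : Set Ty} (hs : s ∈ ListS A) (ht : t ∈ ListS A) : V .cat [t, s] ∈ ListS A := by
  have hne := (ListS_cand A).ne t ht
  obtain ⟨l, hl, h⟩ := hs
  obtain ⟨l', hl', h'⟩ := ht
  rcases h with h | h
  · refine ⟨l ++ l', ?_, h'.imp (cat_nil h) (cat_nil h)⟩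
    simp only [List.mem_append]
    rintro a (ha | ha)
    · exact hl a ha
    · exact hl' a ha
  · exact ⟨l, hl, .inr (cat_st h hne)⟩

theorem t_rec (hA : CandP A) : V .crec [] ∈ ArrS A (ArrS (ArrS NatS (ArrS A A)) (ArrS NatS A)) := by
  intro x hx f hf n hn
  have hx' := hA.ne x hx
  have hf' := (ArrS_cand NatS_cand (ArrS_cand hA hA)).ne f hf
  change V .crec [n, f, x] ∈ A
  have hS : ∀ e n, SuS e n → e ∈ NatS → V .crec [e, f, x] ∈ A → V .crec [n, f, x] ∈ A :=
    fun e n h1 h2 h3 => hA.up _ _ (hf e h2 _ h3) (r_recS h1 hx' hf')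
  obtain ⟨i, h | h⟩ := hn
  · exact hasN.ind (fun n h => hA.up _ _ hx (r_rec0 h hx' hf')) hS (.inl rfl) h
  · exact hasN.ind (fun n h => hA.st _ (sem_stuck (.recs h) (by simp [hx', hf']; exact ⟨_, h⟩)))
      hS (.inr rfl) h

variable {y g : Set Ty}

theorem y_ne (hA : CandP A) (hy : y ∈ ArrS (ArrS NatS A) NatS)
    (hg : g ∈ ArrS NatS (ArrS (ArrS A NatS) A)) : y.Nonempty := (ArrS_cand (ArrS_cand NatS_cand hA) NatS_cand).ne y hy
theorem g_ne (hA : CandP A) (hy : y ∈ ArrS (ArrS NatS A) NatS)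
    (hg : g ∈ ArrS NatS (ArrS (ArrS A NatS) A)) : g.Nonempty :=
  (ArrS_cand NatS_cand (ArrS_cand (ArrS_cand hA NatS_cand) hA)).ne g hg

theorem psi_of (hA : CandP A) (hy : y ∈ ArrS (ArrS NatS A) NatS)
    (hg : g ∈ ArrS NatS (ArrS (ArrS A NatS) A)) {s k b : Set Ty} (hs : s ∈ ListS A) (hk : k ∈ NatS) (hb : b ∈ BoolS)
    (h : Ty.k0 .ff ∈ b → ∀ a ∈ A, V .cphi [V .cat [co a {.k0 .nil}, s], g, y] ∈ NatS) :
    V .cpsi [b, k, s, g, y] ∈ A := by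
  have h1 := y_ne hA hy hg
  have h2 := g_ne hA hy hg
  have h3 := (ListS_cand A).ne s hs
  have h4 := NatS_cand.ne k hk
  have h5 := BoolS_cand.ne b hb
  rcases hb with hb | hb | hb
  · exact hA.up _ _ (t_get' hA hs hk) (r_psiT hb h1 h2 h3 h4)
  · refine hA.up _ _ (hg k hk _ ?_) (r_psiF hb h1 h2 h3 h4)
    exact fun a ha => NatS_cand.up _ _ (h hb a ha) (G_app (hA.ne a ha))
  · exact hA.st _ (sem_stuck (.psi hb) (by simp [*]))

theorem phi_of (hA : CandP A) (hy : y ∈ ArrS (ArrS NatS A) NatS)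
    (hg : g ∈ ArrS NatS (ArrS (ArrS A NatS) A)) {s : Set Ty} (hs : s ∈ ListS A) (h : H y g s ∈ ArrS NatS A) :
    V .cphi [s, g, y] ∈ NatS :=
  NatS_cand.up _ _ (hy _ h) (r_phi (y_ne hA hy hg) (g_ne hA hy hg) ((ListS_cand A).ne s hs))

theorem H_of (hA : CandP A) (hy : y ∈ ArrS (ArrS NatS A) NatS)
    (hg : g ∈ ArrS NatS (ArrS (ArrS A NatS) A)) {s : Set Ty}
    (h : ∀ n ∈ NatS, V .cpsi [V .clt [V .clh [s], n], n, s, g, y] ∈ A) :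
    H y g s ∈ ArrS NatS A :=
  fun n hn => hA.up _ _ (h n hn) (H_app (NatS_cand.ne n hn))

theorem phi_step (hA : CandP A) (hy : y ∈ ArrS (ArrS NatS A) NatS)
    (hg : g ∈ ArrS NatS (ArrS (ArrS A NatS) A)) {s : Set Ty} (hs : s ∈ ListS A)
    (h : ∀ a ∈ A, V .cphi [V .cat [co a {.k0 .nil}, s], g, y] ∈ NatS) :
    V .cphi [s, g, y] ∈ NatS :=
  phi_of hA hy hg hs (H_of hA hy hg fun _ hn =>
    psi_of hA hy hg hs hn (t_lt' hn (t_lh' hs)) fun _ => h)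

theorem phi_star (hA : CandP A) (hy : y ∈ ArrS (ArrS NatS A) NatS)
    (hg : g ∈ ArrS NatS (ArrS (ArrS A NatS) A)) {l : List (Set Ty)} (hl : ∀ a ∈ l, a ∈ A) {s : Set Ty} (hs : hasL .star l s) :
    V .cphi [s, g, y] ∈ NatS := by
  have hs' : s ∈ ListS A := ⟨l, hl, .inr hs⟩
  refine phi_of hA hy hg hs' (H_of hA hy hg fun n hn => ?_)
  have h1 := y_ne hA hy hg
  have h2 := g_ne hA hy hg
  have h3 := hs.ne
  have h4 := NatS_cand.ne n hn
  have hn0 := hn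
  have hb := lh_st hs
  have key : Ty.star ∈ V .clt [V .clh [s], n] → V .cpsi [V .clt [V .clh [s], n], n, s, g, y] ∈ A :=
    fun hb => hA.st _ (sem_stuck (.psi hb) (by simp [*]; exact ⟨_, hb⟩))
  obtain ⟨i, hn⟩ := hn
  rcases lt_or_ge i l.length with h | h
  · rcases hn with hn | hn
    · exact hA.up _ _ (t_get' hA hs' hn0) (r_psiT (lt_tt hn hb h) h1 h2 h3 h4)
    · exact key (lt_st hn hb h)
  · rcases hn with hn | hn
    · exact key (lt_st2 hn hb h)
    · exact key (lt_st2 hn hb h)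

/-- Bar induction: the nil terminated case. -/
theorem phi_nil (hA : CandP A) (hy : y ∈ ArrS (ArrS NatS A) NatS)
    (hg : g ∈ ArrS NatS (ArrS (ArrS A NatS) A)) {l : List (Set Ty)} (hl : ∀ a ∈ l, a ∈ A) {s : Set Ty} (hs : hasL (.k0 .nil) l s) :
    V .cphi [s, g, y] ∈ NatS := by
  by_contra hbad
  let X := {p : Set Ty × List (Set Ty) // (∀ a ∈ p.2, a ∈ A) ∧ hasL (.k0 .nil) p.2 p.1 ∧
    V .cphi [p.1, g, y] ∉ NatS}
  have nxt : ∀ p : X, ∃ q : X, ∃ a, q.1.2 = p.1.2 ++ [a] := by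
    rintro ⟨⟨s, l⟩, h1, h2, h3⟩
    have h4 : ¬ ∀ a ∈ A, V .cphi [V .cat [co a {.k0 .nil}, s], g, y] ∈ NatS :=
      fun h => h3 (phi_step hA hy hg ⟨l, h1, .inl h2⟩ h)
    push Not at h4
    obtain ⟨a, ha, h4⟩ := h4
    refine ⟨⟨⟨V .cat [co a {.k0 .nil}, s], l ++ [a]⟩, ?_, ?_, h4⟩, a, rfl⟩
    · simp only [List.mem_append, List.mem_singleton]
      rintro b (hb | rfl)
      · exact h1 b hb
      · exact ha
    · exact cat_nil h2 ⟨{.k0 .nil}, co_CoS (hA.ne a ha) (by simp), Set.mem_singleton _⟩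
  choose F hF using nxt
  let x0 : X := ⟨⟨s, l⟩, hl, hs, hbad⟩
  let x : ℕ → X := fun m => F^[m] x0
  have hx : ∀ m, ∃ a, (x (m + 1)).1.2 = (x m).1.2 ++ [a] := by
    intro m
    simp only [x, Function.iterate_succ_apply']
    exact hF _
  have hlen : ∀ m, m ≤ (x m).1.2.length := by
    intro m
    induction m with
    | zero => simp
    | succ m ih =>
      obtain ⟨a, ha⟩ := hx m
      rw [ha]; simpa using ih
  have hstab : ∀ i m, i + 1 ≤ m → (x m).1.2[i]? = (x (i + 1)).1.2[i]? := by
    intro i m hm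
    induction m, hm using Nat.le_induction with
    | base => rfl
    | succ m hm ih =>
      obtain ⟨a, ha⟩ := hx m
      rw [ha, List.getElem?_append_left (by have := hlen m; omega), ih]
  let O : Set Ty := {σ | ∃ m0, ∀ m, m0 ≤ m → σ ∈ H y g (x m).1.1}
  have y1 := y_ne hA hy hg
  have g1 := g_ne hA hy hg
  have hO : O ∈ ArrS NatS A := by
    rintro n ⟨i, hn⟩
    rcases hn with ⟨w, hw, hwi⟩ | ⟨w, hw, hwi⟩
    · have hi : i < (x (i + 1)).1.2.length := hlen (i + 1)
      refine hA.up _ _ ((x (i + 1)).2.1 _ (List.getElem_mem hi)) ?_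
      intro σ hσ
      refine .inl ⟨one w, by simpa [rg_one] using hw, i + 1, fun m hm => H_arr ?_⟩
      have hx2 := (x m).2.2.1
      have hnw : hasN (.k0 .zero) i (rg (one w)) := ⟨w, by simp [rg_one], hwi⟩
      refine r_psiT (lt_tt hnw (lh_nil hx2) (by have := hlen m; omega)) y1 g1 hx2.ne
        (rg_nonempty _) ?_
      exact get_in hx2 hnw ((hstab i m hm).trans (List.getElem?_eq_getElem hi)) hσ
    · refine hA.st _ (.inl ⟨one w, by simpa [rg_one] using hw, i + 1, fun m hm => H_arr ?_⟩)
      have hx2 := (x m).2.2.1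
      have hnw : hasN .star i (rg (one w)) := ⟨w, by simp [rg_one], hwi⟩
      have hb := lt_st hnw (lh_nil hx2) (by have := hlen m; omega)
      refine sem_stuck (.psi hb) ?_
      simp only [List.forall_mem_cons, List.not_mem_nil, false_imp_iff, implies_true, and_true]
      exact ⟨⟨_, hb⟩, rg_nonempty _, hx2.ne, g1, y1⟩
  have hcont : ∀ σ ∈ dp y O, ∃ m, σ ∈ dp y (H y g (x m).1.1) := by
    rintro σ (⟨S, h1, h2⟩ | ⟨h1, h2, ⟨t, m, ht⟩⟩)
    · have : ∀ j, ∃ m0, ∀ m, m0 ≤ m → S.2 j ∈ H y g (x m).1.1 := fun j => h1 ⟨j, rfl⟩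
      choose f hf using this
      refine ⟨Finset.univ.sup f, .inl ⟨S, ?_, h2⟩⟩
      rintro _ ⟨j, rfl⟩
      exact hf j _ (Finset.le_sup (Finset.mem_univ j))
    · exact ⟨m, .inr ⟨h1, h2, t, ht m le_rfl⟩⟩
  have hfin : ∀ m, dp y (H y g (x m).1.1) ∉ NatS := fun m h =>
    (x m).2.2.2 (NatS_cand.up _ _ h (r_phi y1 g1 (x m).2.2.1.ne))
  obtain ⟨i, ⟨σ, h1, h2⟩ | ⟨σ, h1, h2⟩⟩ := hy O hO
  · obtain ⟨m, hm⟩ := hcont σ h1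
    exact hfin m ⟨i, .inl ⟨σ, hm, h2⟩⟩
  · obtain ⟨m, hm⟩ := hcont σ h1
    exact hfin m ⟨i, .inr ⟨σ, hm, h2⟩⟩

theorem t_phi' (hA : CandP A) (hy : y ∈ ArrS (ArrS NatS A) NatS)
    (hg : g ∈ ArrS NatS (ArrS (ArrS A NatS) A)) {s : Set Ty} (hs : s ∈ ListS A) : V .cphi [s, g, y] ∈ NatS := by
  obtain ⟨l, hl, h | h⟩ := hs
  · exact phi_nil hA hy hg hl h
  · exact phi_star hA hy hg hl h

theorem t_psi' (hA : CandP A) (hy : y ∈ ArrS (ArrS NatS A) NatS)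
    (hg : g ∈ ArrS NatS (ArrS (ArrS A NatS) A)) {s k b : Set Ty} (hs : s ∈ ListS A) (hk : k ∈ NatS) (hb : b ∈ BoolS) :
    V .cpsi [b, k, s, g, y] ∈ A := by
  refine psi_of hA hy hg hs hk hb fun _ a ha => t_phi' hA hy hg (t_cat' hs ⟨[a], by simpa using ha,
    .inl ⟨{.k0 .nil}, co_CoS (hA.ne a ha) (by simp), Set.mem_singleton _⟩⟩)

end consts

theorem t_cst (c : MC) (τ : ℕ → Set (Set Ty)) : V c [] ∈ ts (ΔMBR c) τ := by
  cases c <;> simp only [ΔMBR, ts, Function.update_self, Set.mem_ofPred_eq]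
  · exact fun A hA => t_if hA
  · exact t_lt
  · exact fun A hA s hs => t_lh' hs
  · exact fun A hA s hs n hn => t_get' hA hs hn
  · exact fun A hA s hs t ht => t_cat' hs ht
  · exact fun A hA => t_rec hA
  · exact fun A hA y hy g hg s hs => t_phi' hA hy hg hs
  · exact fun A hA y hy g hg s hs k hk b hb => t_psi' hA hy hg hs hk hb

/-! ### Soundness of typing -/

theorem ftyd_sound {Γ : Ctx} {M : Tm FCO fArity MC} {ρ : FTy} (h : FTyd ΔMBR Γ M ρ) :
    ∀ (τ : ℕ → Set (Set Ty)), (∀ p, CandP (τ p)) → ∀ (f : ℕ → ℕ) (η : ℕ → Set Ty),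
    (∀ x ρ', Γ x = some ρ' → η (f x) ∈ ts ρ' τ) → sm η (db M f) ∈ ts ρ τ := by
  induction h with
  | var h => intro τ hτ f η hη; rw [db, sm_var]; exact hη _ _ h
  | cst c => intro τ hτ f η hη; rw [db, sm_cst']; exact t_cst c τ
  | @lam Γ x M ρ σ _ ih =>
    intro τ hτ f η hη a ha
    refine (ts_cand σ hτ).up _ _ (ih τ hτ (ext f x) (scons a η) ?_)
      (sm_lam ((ts_cand ρ hτ).ne a ha) _)
    intro y ρ' hy
    by_cases e : y = x
    · simp only [e, if_true, Option.some.injEq] at hy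
      subst hy
      simpa [ext, e, scons] using ha
    · simp only [e, if_false] at hy
      simpa [ext, e, scons] using hη y ρ' hy
  | app _ _ ih1 ih2 =>
    intro τ hτ f η hη
    rw [db, sm_app]
    exact ih1 τ hτ f η hη _ (ih2 τ hτ f η hη)
  | @allI Γ M ρ p _ hp ih =>
    intro τ hτ f η hη A hA
    refine ih _ (cand_update hτ hA) f η fun x ρ' hx => ?_
    rw [ts_congr ρ' (τ' := τ)]
    · exact hη x ρ' hx
    · intro q hq
      have : q ≠ p := by rintro rfl; exact hp x ρ' hx hq
      simp [this]
  | @allE Γ M ρ p σ _ ih =>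
    intro τ hτ f η hη
    have := ih τ hτ f η hη (ts σ τ) (ts_cand σ hτ)
    rw [tsubst1, ts_subst]
    convert this using 2
    ext q : 1
    rcases eq_or_ne q p with rfl | hq
    · simp
    · simp [hq, ts]
  | tt => intro τ hτ f η hη; exact .inl .k0
  | ff => intro τ hτ f η hη; exact .inr (.inl .k0)
  | zero => intro τ hτ f η hη; exact ⟨0, .inl (hasN_zero.2 .k0)⟩
  | succ _ ih =>
    intro τ hτ f η hη
    obtain ⟨i, h⟩ := ih τ hτ f η hη
    refine ⟨i + 1, ?_⟩
    change hasN _ _ (sm η (.k1 _)) ∨ hasN _ _ (sm η (.k1 _))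
    rw [sm_k1]
    exact h.imp hasN_su hasN_su
  | nil => intro τ hτ f η hη; exact ⟨[], by simp, .inl .k0⟩
  | @cons Γ M N ρ _ _ ih1 ih2 =>
    intro τ hτ f η hη
    have h1 := ih1 τ hτ f η hη
    have h2 := ih2 τ hτ f η hη
    have h3 := co_CoS ((ts_cand ρ hτ).ne _ h1) ((ListS_cand _).ne _ h2)
    obtain ⟨l, hl, h⟩ := h2
    refine ⟨sm η (db M f) :: l, ?_, ?_⟩
    · simp only [List.forall_mem_cons]
      exact ⟨h1, hl⟩
    change hasL _ _ (sm η (.k2 (db M f) (db N f))) ∨ hasL _ _ (sm η (.k2 (db M f) (db N f)))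
    rw [sm_k2]
    exact h.imp (fun h => ⟨_, h3, h⟩) fun h => ⟨_, h3, h⟩

theorem main_sn {M : Tm FCO fArity MC} {ρ : FTy} (h : FTyd ΔMBR emptyCtx M ρ) : SN MBR M := by
  have hτ : ∀ _ : ℕ, CandP BoolS := fun _ => BoolS_cand
  have := ftyd_sound h (fun _ => BoolS) hτ id (fun _ => ∅) (by intro x ρ' hx; simp [emptyCtx] at hx)
  obtain ⟨σ, hσ⟩ := (ts_cand ρ hτ).ne _ this
  exact sn_of_db M id (typ_sn hσ)

end Pf
end SNPaper
namespace SNPaper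

/-- Strong normalisation for system F with modified bar
recursion: every closed term typeable in extended system F w.r.t. the type
assignment `Δ_MBR` is strongly normalising w.r.t. MBR (β-reduction together
with Gödel primitive recursion, the pattern-matching rules for
`if`, `<`, `lh`, `get`, `++`, and modified bar recursion). -/
theorem statement19 (M : Tm FCO fArity MC) (hM : FV M = ∅)
    (hty : ∃ ρ : FTy, ρ.Closed ∧ FTyd ΔMBR emptyCtx M ρ) :
    SN MBR M := by
  obtain ⟨ρ, _, h⟩ := hty
  exact Pf.main_sn h

end SNPaper
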